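/- arXiv:1108.2184 — 8 statements merged into one kernel-verified Lean document; each statement's English description precedes it below -/
import Mathlib

section
/- For all Schwartz functions f, g ∈ 𝓢(ℝ^d), the Moyal product is tracial: ∫_{ℝ^d} (f ⋆ g)(x) dx = ∫_{ℝ^d} f(x) g(x) dx = ∫_{ℝ^d} (g ⋆ f)(x) dx. -/
/-!
Substituting `z = x + y` in the inner integral gives
`(f ⋆ g)(x) = (2π)^{-d} ∫ f(x + ½Θk) e^{-i⟨k,x⟩} G(k) dk` with `G(k) = ∫ g(z) e^{i⟨k,z⟩} dz`.
The integrand is integrable in `(x, k)`, so the integral over `x` may be done first. Translating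
`x` by `½Θk` leaves the phase unchanged because `⟨k, Θk⟩ = 0` for skew-symmetric `Θ`
(`dotR_mulVec_self`), so the twist by `Θ` disappears. Swapping the integrals once more, the
integral over `k` recovers `g(x)` by Fourier inversion (`exists_fourier`). The second equality
follows from the first by exchanging `f` and `g`.
-/

open MeasureTheory Real Matrix

noncomputable section

/-- Euclidean dot product on `Fin d → ℝ`. -/
def dotR {d : ℕ} (x y : Fin d → ℝ) : ℝ := ∑ i, x i * y i

/-- The Moyal product of two complex-valued functions on `ℝ^d`, defined by the
iterated integral `(f ⋆ g)(x) = (2π)^{-d} ∫ k ∫ y f(x + ½Θk) g(x+y) e^{i⟨k,y⟩}`. -/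
def moyal {d : ℕ} (Θ : Matrix (Fin d) (Fin d) ℝ) (f g : (Fin d → ℝ) → ℂ)
    (x : Fin d → ℝ) : ℂ :=
  ((2 * π) ^ d : ℝ)⁻¹ •
    ∫ k : Fin d → ℝ, ∫ y : Fin d → ℝ,
      f (x + (2 : ℝ)⁻¹ • Θ.mulVec k) * g (x + y) *
        Complex.exp (Complex.I * (dotR k y : ℂ))

/-- Fourier inversion on `Fin d → ℝ`, in the normalisation without `2π` in the phase. It is
transported from `EuclideanSpace ℝ (Fin d)`, where Mathlib's phase is `e^{2πi⟨v,w⟩}`, by the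
dilation `k ↦ k / 2π`. -/
lemma exists_fourier {d : ℕ} (g : SchwartzMap (Fin d → ℝ) ℂ) :
    ∃ G : SchwartzMap (Fin d → ℝ) ℂ,
      (∀ k, G k = ∫ y, g y * Complex.exp (Complex.I * (dotR k y : ℂ))) ∧
      ∀ x, ∫ k, G k * Complex.exp (-(Complex.I * (dotR k x : ℂ))) = ((2 * π) ^ d : ℝ) • g x := by
  have h2π : (2 * π : ℝ) ≠ 0 := by positivity
  let e := EuclideanSpace.equiv (Fin d) ℝ
  let g' : SchwartzMap (EuclideanSpace ℝ (Fin d)) ℂ :=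
    SchwartzMap.compCLMOfContinuousLinearEquiv ℂ e g
  -- Dilating by `1 / 2π` turns the phase `e^{2πi⟨v,y⟩}` into `e^{i⟨k,y⟩}`.
  let dil : (Fin d → ℝ) ≃L[ℝ] (Fin d → ℝ) :=
    ContinuousLinearEquiv.smulLeft (Units.mk0 (2 * π)⁻¹ (inv_ne_zero h2π))
  let F : SchwartzMap (Fin d → ℝ) ℂ :=
    SchwartzMap.compCLMOfContinuousLinearEquiv ℂ e.symm (FourierTransform.fourierInv g')
  have hinner : ∀ x y : Fin d → ℝ,
      inner ℝ (WithLp.toLp 2 x : EuclideanSpace ℝ (Fin d)) (WithLp.toLp 2 y) = dotR x y := by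
    intro x y
    simp [dotR, PiLp.inner_apply, mul_comm]
  have hsmul : ∀ (c : ℝ) (x y : Fin d → ℝ), dotR (c • x) y = c * dotR x y := by
    intro c x y
    simp [dotR, Finset.mul_sum, mul_assoc]
  have hcomm : ∀ x y : Fin d → ℝ, dotR x y = dotR y x := by
    intro x y
    simp [dotR, mul_comm]
  have toPi : ∀ u : EuclideanSpace ℝ (Fin d) → ℂ,
      ∫ v, u v = ∫ y : Fin d → ℝ, u (WithLp.toLp 2 y) := fun u =>
    ((PiLp.volume_preserving_toLp (Fin d)).integral_comp
      (MeasurableEquiv.toLp 2 (Fin d → ℝ)).measurableEmbedding u).symm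
  refine ⟨SchwartzMap.compCLMOfContinuousLinearEquiv ℂ dil F, fun k => ?_, fun x => ?_⟩
  · change (FourierTransform.fourierInv g') (WithLp.toLp 2 ((2 * π)⁻¹ • k)) = _
    rw [SchwartzMap.fourierInv_coe, Real.fourierInv_eq', toPi]
    congr 1 with y
    rw [hinner, hcomm, hsmul, smul_eq_mul, mul_comm, mul_inv_cancel_left₀ h2π, mul_comm Complex.I]
    rfl
  · have h1 := MeasureTheory.Measure.integral_comp_inv_smul_of_nonneg
      (volume : Measure (Fin d → ℝ))
      (fun v => F v * Complex.exp (-(Complex.I * (dotR ((2 * π) • v) x : ℂ))))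
      (R := 2 * π) (by positivity)
    simp only [smul_inv_smul₀ h2π, Module.finrank_fintype_fun_eq_card, Fintype.card_fin] at h1
    refine h1.trans ?_
    congr 1
    have h2 : FourierTransform.fourier (FourierTransform.fourierInv g') (WithLp.toLp 2 x) = g x := by
      rw [FourierTransform.fourier_fourierInv_eq]; rfl
    rw [← h2, SchwartzMap.fourier_coe, Real.fourier_eq', toPi]
    congr 1 with v
    have hF : F v = FourierTransform.fourierInv g' (WithLp.toLp 2 v) := rfl
    rw [hinner, hsmul, smul_eq_mul, mul_comm, hF]
    congr 2
    push_cast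
    ring

lemma dotR_add_right {d : ℕ} (k x y : Fin d → ℝ) : dotR k (x + y) = dotR k x + dotR k y := by
  simp [dotR, mul_add, Finset.sum_add_distrib]

lemma dotR_mulVec_self {d : ℕ} {Θ : Matrix (Fin d) (Fin d) ℝ} (hskew : Θᵀ = -Θ)
    (k : Fin d → ℝ) : dotR k (Θ.mulVec k) = 0 := by
  have h : k ⬝ᵥ Θ *ᵥ k = -(k ⬝ᵥ Θ *ᵥ k) := by
    conv_lhs => rw [dotProduct_mulVec, ← mulVec_transpose, hskew, neg_mulVec, neg_dotProduct,
      dotProduct_comm]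
  change k ⬝ᵥ Θ *ᵥ k = 0
  linarith

lemma norm_phase (t : ℝ) : ‖Complex.exp (-(Complex.I * (t : ℂ)))‖ = 1 := by
  rw [Complex.norm_exp]; simp

lemma continuous_phase {d : ℕ} : Continuous fun p : (Fin d → ℝ) × (Fin d → ℝ) =>
    Complex.exp (-(Complex.I * (dotR p.2 p.1 : ℂ))) := by
  unfold dotR
  fun_prop

/-- The integral of `f ⋆ g` does not see `Θ`. Applied to `(g, f)`, this also gives the second
equality of traciality. -/
lemma moyal_integral {d : ℕ} {Θ : Matrix (Fin d) (Fin d) ℝ} (hskew : Θᵀ = -Θ)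
    (f g : SchwartzMap (Fin d → ℝ) ℂ) :
    ∫ x, moyal Θ f g x = ∫ x, f x * g x := by
  obtain ⟨G, hG, hinv⟩ := exists_fourier g
  let ph : (Fin d → ℝ) → (Fin d → ℝ) → ℂ := fun x k =>
    Complex.exp (-(Complex.I * (dotR k x : ℂ)))
  have hinner : ∀ x k : Fin d → ℝ,
      ∫ y, f (x + (2 : ℝ)⁻¹ • Θ.mulVec k) * g (x + y) * Complex.exp (Complex.I * (dotR k y : ℂ))
        = f (x + (2 : ℝ)⁻¹ • Θ.mulVec k) * (ph x k * G k) := by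
    intro x k
    rw [hG, ← integral_add_left_eq_self
      (fun y => g y * Complex.exp (Complex.I * (dotR k y : ℂ))) x, ← integral_const_mul, ← integral_const_mul]
    congr 1 with y
    have : Complex.exp (Complex.I * (dotR k y : ℂ))
        = ph x k * Complex.exp (Complex.I * (dotR k (x + y) : ℂ)) := by
      rw [← Complex.exp_add, dotR_add_right]
      congr 1
      push_cast
      ring
    rw [this]
    ring
  have hprod : Integrable (Function.uncurry fun x k : Fin d → ℝ =>
      f (x + (2 : ℝ)⁻¹ • Θ.mulVec k) * (ph x k * G k)) := by
    have hcont : Continuous (Function.uncurry fun x k : Fin d → ℝ =>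
        f (x + (2 : ℝ)⁻¹ • Θ.mulVec k) * (ph x k * G k)) := by
      have h1 : Continuous fun p : (Fin d → ℝ) × (Fin d → ℝ) =>
          f (p.1 + (2 : ℝ)⁻¹ • Θ.mulVec p.2) :=
        f.continuous.comp (continuous_fst.add
          ((continuous_const.matrix_mulVec continuous_snd).fun_const_smul _))
      exact h1.mul (continuous_phase.mul (G.continuous.comp continuous_snd))
    have hnorm : ∀ x k : Fin d → ℝ, ‖f (x + (2 : ℝ)⁻¹ • Θ.mulVec k) * (ph x k * G k)‖
        = ‖f (x + (2 : ℝ)⁻¹ • Θ.mulVec k)‖ * ‖G k‖ := by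
      intro x k
      rw [norm_mul, norm_mul, norm_phase, one_mul]
    -- For fixed `k` the `x`-integral of the norm is `‖f‖₁ ‖G k‖`, by translation invariance.
    rw [Measure.volume_eq_prod, integrable_prod_iff' hcont.aestronglyMeasurable]
    constructor
    · refine Filter.Eventually.of_forall fun k => ?_
      refine (((f.integrable (μ := volume)).comp_add_right _).norm.mul_const ‖G k‖).mono'
        (hcont.comp (Continuous.prodMk_left k)).aestronglyMeasurable
        (Filter.Eventually.of_forall fun x => (hnorm x k).le)
    · have hshift : ∀ k : Fin d → ℝ,
          ∫ x, ‖f (x + (2 : ℝ)⁻¹ • Θ.mulVec k)‖ = ∫ x, ‖f x‖ := fun k =>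
        integral_add_right_eq_self (fun x => ‖f x‖) ((2 : ℝ)⁻¹ • Θ.mulVec k)
      simp only [Function.uncurry_apply_pair, hnorm, integral_mul_const, hshift]
      exact (G.integrable.norm).const_mul _
  have hprod2 : Integrable (Function.uncurry fun k x : Fin d → ℝ => f x * (ph x k * G k)) := by
    refine ((G.integrable (μ := volume)).mul_prod (f.integrable (μ := volume))).mono ?_ ?_
    · have : Continuous fun p : (Fin d → ℝ) × (Fin d → ℝ) => ph p.2 p.1 :=
        continuous_phase.comp continuous_swap
      exact ((f.continuous.comp continuous_snd).mul
        (this.mul (G.continuous.comp continuous_fst))).aestronglyMeasurable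
    · refine Filter.Eventually.of_forall fun p => le_of_eq ?_
      rw [Function.uncurry_def, norm_mul, norm_mul, norm_phase, norm_mul, one_mul, mul_comm]
  have htwist : ∀ k : Fin d → ℝ,
      ∫ x, f (x + (2 : ℝ)⁻¹ • Θ.mulVec k) * (ph x k * G k) = ∫ x, f x * (ph x k * G k) := by
    intro k
    rw [← integral_add_right_eq_self (fun x => f x * (ph x k * G k)) ((2 : ℝ)⁻¹ • Θ.mulVec k)]
    congr 1 with x
    have : dotR k (x + (2 : ℝ)⁻¹ • Θ.mulVec k) = dotR k x := by
      rw [dotR_add_right, ← mulVec_smul]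
      have h := dotR_mulVec_self (Θ := (2 : ℝ)⁻¹ • Θ) (by simp [hskew]) k
      rw [smul_mulVec, ← mulVec_smul] at h
      rw [h, add_zero]
    simp only [ph, this]
  simp only [moyal, hinner]
  rw [integral_smul, integral_integral_swap hprod]
  simp only [htwist]
  rw [integral_integral_swap hprod2, ← integral_smul]
  congr 1 with x
  have h := hinv x
  rw [integral_const_mul]
  simp only [ph, mul_comm _ (G _)]
  rw [h, mul_smul_comm, smul_smul, inv_mul_cancel₀ (by positivity), one_smul]

/-- Traciality of the Moyal product:
`∫ (f ⋆ g) = ∫ f·g = ∫ (g ⋆ f)` for Schwartz functions `f, g`. -/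
theorem moyal_tracial {d : ℕ} (hd : Even d) (hd2 : 2 ≤ d)
    (Θ : Matrix (Fin d) (Fin d) ℝ) (hskew : Θᵀ = -Θ) (hdet : Θ.det ≠ 0)
    (f g : SchwartzMap ((Fin d) → ℝ) ℂ) :
    (∫ x : Fin d → ℝ, moyal Θ ⇑f ⇑g x) = (∫ x : Fin d → ℝ, f x * g x) ∧
    (∫ x : Fin d → ℝ, f x * g x) = (∫ x : Fin d → ℝ, moyal Θ ⇑g ⇑f x) := by
  refine ⟨moyal_integral hskew f g, ?_⟩
  rw [moyal_integral hskew g f]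
  simp only [mul_comm]

end
end

section
/- The Moyal product satisfies the Leibniz rule: for all Schwartz functions f, g ∈ 𝓢(ℝ^d) and each μ ∈ {1,…,d}, ∂_μ(f ⋆ g) = (∂_μ f) ⋆ g + f ⋆ (∂_μ g) as functions on ℝ^d. -/
/-!
The `y`-integral factors: with `G_h(x, k) = ∫ e^{i⟨k,y⟩} h(x + y) dy` (`oscInt`), one has
`(f ⋆ g)(x) = (2π)^{-d} ∫ f(x + ½Θk) G_g(x, k) dk`. Both integrals may be differentiated under the
integral sign, because a Schwartz function `h` and an injective linear map `A` admit an integrable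
`b` with `‖h(x + A k)‖ ≤ b k` for all `x` in a given ball (`exists_integrable_bound`). For the inner
integral `A = id`, and the derivative of `G_g` in `x` is `G_{Dg}` (`hasFDerivAt_oscInt`). For the
outer integral `A = ½Θ`, which is injective as `det Θ ≠ 0`; the decay in `k` comes from `f` alone,
since `G_g` and `G_{Dg}` are bounded by the `L¹` norms of `g` and `Dg`. The Leibniz rule is then the
product rule for the integrand, evaluated at the `μ`-th basis vector.
-/

open MeasureTheory Real Matrix

noncomputable section

/-- A Schwartz function composed with `k ↦ x + A k`, where `A` is bounded below, is dominated by an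
integrable function uniformly for `x` in a ball. -/
lemma exists_integrable_bound {d : ℕ} {V : Type*} [NormedAddCommGroup V] [NormedSpace ℝ V]
    (h : SchwartzMap (Fin d → ℝ) V) (A : (Fin d → ℝ) → (Fin d → ℝ)) (M R : ℝ) (hM : 0 ≤ M)
    (hR : 0 ≤ R) (hA : ∀ k, ‖k‖ ≤ M * ‖A k‖) :
    ∃ b : (Fin d → ℝ) → ℝ, Integrable b ∧ ∀ x, ‖x‖ ≤ R → ∀ k, ‖h (x + A k)‖ ≤ b k := by
  obtain ⟨C, hC⟩ : ∃ C : ℝ, ∀ z, (1 + ‖z‖) ^ (d + 1) * ‖h z‖ ≤ C := by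
    have hs := SchwartzMap.one_add_le_sup_seminorm_apply (𝕜 := ℝ) (m := (d + 1, 0)) (k := d + 1)
      (n := 0) le_rfl le_rfl h
    simp only [norm_iteratedFDeriv_zero] at hs
    exact ⟨_, hs⟩
  set L : ℝ := 1 + M + M * R with hL
  have hMR : 0 ≤ M * R := mul_nonneg hM hR
  refine ⟨fun k => (C * L ^ (d + 1)) * (1 + ‖k‖) ^ (-((d + 1 : ℕ) : ℝ)), ?_, ?_⟩
  · refine (integrable_one_add_norm ?_).const_mul _
    simp
  · intro x hx k
    have h1 : ‖A k‖ ≤ ‖x + A k‖ + R := by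
      have := norm_sub_le (x + A k) x
      rw [add_sub_cancel_left] at this
      linarith
    have h2 : 1 + ‖k‖ ≤ L * (1 + ‖x + A k‖) := by
      have h3 : M * ‖A k‖ ≤ M * (‖x + A k‖ + R) := mul_le_mul_of_nonneg_left h1 hM
      have h4 : 0 ≤ M * R * ‖x + A k‖ := by positivity
      have := hA k
      have := norm_nonneg (x + A k)
      rw [hL]
      linarith
    have hp : 0 < 1 + ‖k‖ := by positivity
    beta_reduce
    rw [Real.rpow_neg hp.le, Real.rpow_natCast, ← div_eq_mul_inv, le_div_iff₀ (by positivity)]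
    calc ‖h (x + A k)‖ * (1 + ‖k‖) ^ (d + 1)
        ≤ ‖h (x + A k)‖ * (L * (1 + ‖x + A k‖)) ^ (d + 1) := by gcongr
      _ = ((1 + ‖x + A k‖) ^ (d + 1) * ‖h (x + A k)‖) * L ^ (d + 1) := by
        rw [mul_pow]
        ring
      _ ≤ C * L ^ (d + 1) := by
        gcongr
        exact hC _

/-- The oscillatory integral `∫ e^{i⟨k,y⟩} h(x + y) dy`. -/
def oscInt {d : ℕ} {V : Type*} [NormedAddCommGroup V] [NormedSpace ℝ V] [NormedSpace ℂ V]
    (h : (Fin d → ℝ) → V) (x k : Fin d → ℝ) : V :=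
  ∫ y : Fin d → ℝ, Complex.exp (Complex.I * (dotR k y : ℂ)) • h (x + y)

lemma norm_exp_dotR {d : ℕ} (k y : Fin d → ℝ) :
    ‖Complex.exp (Complex.I * (dotR k y : ℂ))‖ = 1 := by
  rw [mul_comm]
  exact Complex.norm_exp_ofReal_mul_I _

section

variable {d : ℕ} {V : Type*} [NormedAddCommGroup V] [NormedSpace ℝ V] [NormedSpace ℂ V]

lemma continuous_osc_integrand (h : SchwartzMap (Fin d → ℝ) V) (x k : Fin d → ℝ) :
    Continuous fun y => Complex.exp (Complex.I * (dotR k y : ℂ)) • h (x + y) := by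
  have := h.continuous
  unfold dotR
  fun_prop

lemma integrable_osc_integrand (h : SchwartzMap (Fin d → ℝ) V) (x k : Fin d → ℝ) :
    Integrable fun y => Complex.exp (Complex.I * (dotR k y : ℂ)) • h (x + y) := by
  have hi : Integrable fun y => h (x + y) := h.integrable.comp_add_left x
  refine hi.norm.mono' (continuous_osc_integrand h x k).aestronglyMeasurable
    (Filter.Eventually.of_forall fun y => ?_)
  rw [norm_smul, norm_exp_dotR, one_mul]

lemma norm_oscInt_le (h : SchwartzMap (Fin d → ℝ) V) (x k : Fin d → ℝ) :
    ‖oscInt h x k‖ ≤ ∫ y, ‖h y‖ := by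
  refine (norm_integral_le_integral_norm _).trans (le_of_eq ?_)
  simp only [norm_smul, norm_exp_dotR, one_mul]
  exact integral_add_left_eq_self (fun y => ‖h y‖) x

lemma continuous_oscInt (h : SchwartzMap (Fin d → ℝ) V) (x : Fin d → ℝ) :
    Continuous (oscInt h x) := by
  have hi : Integrable fun y => h (x + y) := h.integrable.comp_add_left x
  refine continuous_of_dominated
    (fun k => (continuous_osc_integrand h x k).aestronglyMeasurable)
    (fun k => Filter.Eventually.of_forall fun y => ?_) hi.norm
    (Filter.Eventually.of_forall fun y => ?_)
  · rw [norm_smul, norm_exp_dotR, one_mul]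
  · unfold dotR
    fun_prop

end

lemma hasFDerivAt_translate {d : ℕ} (h : SchwartzMap (Fin d → ℝ) ℂ) (x a : Fin d → ℝ) :
    HasFDerivAt (fun x => h (x + a)) (fderiv ℝ h (x + a)) x := by
  have := (h.differentiableAt (x := x + a)).hasFDerivAt.comp x
    ((hasFDerivAt_id (𝕜 := ℝ) x).add_const a)
  rwa [ContinuousLinearMap.comp_id] at this

/-- Differentiation in `x` passes under the oscillatory integral. -/
lemma hasFDerivAt_oscInt {d : ℕ} (g : SchwartzMap (Fin d → ℝ) ℂ) (x k : Fin d → ℝ) :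
    HasFDerivAt (fun x => oscInt g x k) (oscInt (fun y => fderiv ℝ g y) x k) x := by
  obtain ⟨b, hb, hbd⟩ := exists_integrable_bound
    (SchwartzMap.fderivCLM ℝ (Fin d → ℝ) ℂ g) id 1 (‖x‖ + 1)
    zero_le_one (by positivity) (by simp)
  refine hasFDerivAt_integral_of_dominated_of_fderiv_le (bound := b)
    (F' := fun x y => Complex.exp (Complex.I * (dotR k y : ℂ)) • fderiv ℝ g (x + y))
    (Metric.ball_mem_nhds x one_pos)
    (Filter.Eventually.of_forall fun x => (continuous_osc_integrand g x k).aestronglyMeasurable)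
    (integrable_osc_integrand g x k)
    (continuous_osc_integrand (SchwartzMap.fderivCLM ℝ (Fin d → ℝ) ℂ g) x k).aestronglyMeasurable
    (Filter.Eventually.of_forall fun y x' hx' => ?_) hb
    (Filter.Eventually.of_forall fun y x' _ => ?_)
  · rw [norm_smul, norm_exp_dotR, one_mul]
    refine hbd x' ?_ y
    have := norm_le_norm_add_norm_sub' x' x
    rw [Metric.mem_ball, dist_eq_norm] at hx'
    linarith
  · exact (hasFDerivAt_translate g x' y).fun_const_smul (Complex.exp (Complex.I * (dotR k y : ℂ)))

/-- The Moyal product with its inner integral factored, written for a linear map `A` equal to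
`½Θ`. -/
lemma moyal_eq_oscInt {d : ℕ} (Θ : Matrix (Fin d) (Fin d) ℝ)
    (A : (Fin d → ℝ) →L[ℝ] (Fin d → ℝ)) (hA : ∀ k, A k = (2 : ℝ)⁻¹ • Θ.mulVec k)
    (f g : (Fin d → ℝ) → ℂ) (x : Fin d → ℝ) :
    moyal Θ f g x = ((2 * π) ^ d : ℝ)⁻¹ • ∫ k, f (x + A k) * oscInt g x k := by
  unfold moyal oscInt
  congr 2
  funext k
  rw [← integral_const_mul]
  congr 1
  funext y
  rw [hA, smul_eq_mul]
  ring

/-- The outer integral may be differentiated in `x` under the integral sign. -/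
lemma hasFDerivAt_outer {d : ℕ} (f g : SchwartzMap (Fin d → ℝ) ℂ)
    (A : (Fin d → ℝ) →L[ℝ] (Fin d → ℝ)) (M : ℝ) (hM : 0 ≤ M) (hA : ∀ k, ‖k‖ ≤ M * ‖A k‖)
    (x : Fin d → ℝ) :
    Integrable (fun k => f (x + A k) • oscInt (fun y => fderiv ℝ g y) x k) ∧
    Integrable (fun k => oscInt g x k • fderiv ℝ f (x + A k)) ∧
    HasFDerivAt (fun x => ∫ k, f (x + A k) * oscInt g x k)
      (∫ k, (f (x + A k) • oscInt (fun y => fderiv ℝ g y) x k +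
        oscInt g x k • fderiv ℝ f (x + A k))) x := by
  set f' := SchwartzMap.fderivCLM ℝ (Fin d → ℝ) ℂ f with hf'
  set g' := SchwartzMap.fderivCLM ℝ (Fin d → ℝ) ℂ g with hg'
  have hR : 0 ≤ ‖x‖ + 1 := by positivity
  obtain ⟨b, hb, hbd⟩ := exists_integrable_bound f A M _ hM hR hA
  obtain ⟨b', hb', hbd'⟩ := exists_integrable_bound f' A M _ hM hR hA
  have cf : ∀ x, Continuous fun k => f (x + A k) := fun x => by
    have := f.continuous
    fun_prop
  have cf' : ∀ x, Continuous fun k => f' (x + A k) := fun x => by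
    have := f'.continuous
    fun_prop
  have c0 : ∀ x, Continuous fun k => f (x + A k) * oscInt g x k :=
    fun x => (cf x).mul (continuous_oscInt g x)
  have c1 : Continuous fun k => f (x + A k) • oscInt g' x k :=
    (cf x).smul (continuous_oscInt g' x)
  have c2 : Continuous fun k => oscInt g x k • f' (x + A k) :=
    (continuous_oscInt g x).smul (cf' x)
  have n1 : ∀ z, ‖z‖ ≤ ‖x‖ + 1 → ∀ k, ‖f (z + A k) • oscInt g' z k‖ ≤ b k * ∫ y, ‖g' y‖ := by
    intro z hz k
    rw [norm_smul]
    exact mul_le_mul (hbd z hz k) (norm_oscInt_le g' z k) (norm_nonneg _)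
      ((norm_nonneg _).trans (hbd z hz k))
  have n2 : ∀ z, ‖z‖ ≤ ‖x‖ + 1 → ∀ k, ‖oscInt g z k • f' (z + A k)‖ ≤ (∫ y, ‖g y‖) * b' k := by
    intro z hz k
    rw [norm_smul]
    exact mul_le_mul (norm_oscInt_le g z k) (hbd' z hz k) (norm_nonneg _)
      (integral_nonneg fun _ => norm_nonneg _)
  have hx : ‖x‖ ≤ ‖x‖ + 1 := by linarith
  refine ⟨(hb.mul_const _).mono' c1.aestronglyMeasurable (Filter.Eventually.of_forall (n1 x hx)),
    (hb'.const_mul _).mono' c2.aestronglyMeasurable (Filter.Eventually.of_forall (n2 x hx)), ?_⟩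
  refine hasFDerivAt_integral_of_dominated_of_fderiv_le
    (bound := fun k => b k * (∫ y, ‖g' y‖) + (∫ y, ‖g y‖) * b' k)
    (F' := fun x k => f (x + A k) • oscInt (fun y => fderiv ℝ g y) x k +
        oscInt g x k • fderiv ℝ f (x + A k))
    (Metric.ball_mem_nhds x one_pos)
    (Filter.Eventually.of_forall fun x => (c0 x).aestronglyMeasurable)
    ?_ (c1.add c2).aestronglyMeasurable
    (Filter.Eventually.of_forall fun k z hz => ?_) ((hb.mul_const _).add (hb'.const_mul _))
    (Filter.Eventually.of_forall fun k z _ => ?_)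
  · refine (hb.mul_const (∫ y, ‖g y‖)).mono' (c0 x).aestronglyMeasurable
      (Filter.Eventually.of_forall fun k => ?_)
    rw [norm_mul]
    exact mul_le_mul (hbd x hx k) (norm_oscInt_le g x k) (norm_nonneg _)
      ((norm_nonneg _).trans (hbd x hx k))
  · have hz' : ‖z‖ ≤ ‖x‖ + 1 := by
      have := norm_le_norm_add_norm_sub' z x
      rw [Metric.mem_ball, dist_eq_norm] at hz
      linarith
    exact (norm_add_le _ _).trans (add_le_add (n1 z hz' k) (n2 z hz' k))
  · exact (hasFDerivAt_translate f z (A k)).mul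
      (hasFDerivAt_oscInt g z k)

/-- Leibniz rule for the Moyal product:
`∂_μ(f ⋆ g) = (∂_μ f) ⋆ g + f ⋆ (∂_μ g)`. -/
theorem moyal_leibniz {d : ℕ} (hd : Even d) (hd2 : 2 ≤ d)
    (Θ : Matrix (Fin d) (Fin d) ℝ) (hskew : Θᵀ = -Θ) (hdet : Θ.det ≠ 0)
    (f g : SchwartzMap ((Fin d) → ℝ) ℂ) (μ : Fin d) (x : Fin d → ℝ) :
    fderiv ℝ (moyal Θ ⇑f ⇑g) x (Pi.single μ 1) =
      moyal Θ (fun y => fderiv ℝ ⇑f y (Pi.single μ 1)) ⇑g x +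
        moyal Θ ⇑f (fun y => fderiv ℝ ⇑g y (Pi.single μ 1)) x := by
  set A : (Fin d → ℝ) →L[ℝ] (Fin d → ℝ) :=
    (2 : ℝ)⁻¹ • LinearMap.toContinuousLinearMap Θ.mulVecLin with hAdef
  have hA : ∀ k, A k = (2 : ℝ)⁻¹ • Θ.mulVec k := fun k => rfl
  -- The operator norm of `2Θ⁻¹` bounds `½Θ` from below.
  set B : (Fin d → ℝ) →L[ℝ] (Fin d → ℝ) :=
    (2 : ℝ) • LinearMap.toContinuousLinearMap Θ⁻¹.mulVecLin with hBdef
  have hBA : ∀ k, B (A k) = k := fun k => by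
    change (2 : ℝ) • Θ⁻¹.mulVec ((2 : ℝ)⁻¹ • Θ.mulVec k) = k
    rw [Matrix.mulVec_smul, Matrix.mulVec_mulVec, Matrix.nonsing_inv_mul _ hdet.isUnit,
      Matrix.one_mulVec, smul_smul]
    norm_num
  have hAk : ∀ k, ‖k‖ ≤ ‖B‖ * ‖A k‖ := fun k => by
    have := B.le_opNorm (A k)
    rwa [hBA] at this
  obtain ⟨i1, i2, hD⟩ := hasFDerivAt_outer f g A ‖B‖ (norm_nonneg _) hAk x
  have hm : moyal Θ f g = fun x => ((2 * π) ^ d : ℝ)⁻¹ • ∫ k, f (x + A k) * oscInt g x k :=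
    funext fun x => moyal_eq_oscInt Θ A hA f g x
  rw [hm, (hD.fun_const_smul _).fderiv, moyal_eq_oscInt Θ A hA, moyal_eq_oscInt Θ A hA, ← smul_add,
    _root_.smul_apply]
  congr 1
  have hosc : ∀ k, oscInt (fun y => fderiv ℝ g y) x k (Pi.single μ 1) =
      oscInt (fun y => fderiv ℝ g y (Pi.single μ 1)) x k := fun k =>
    ContinuousLinearMap.integral_apply
      (integrable_osc_integrand (SchwartzMap.fderivCLM ℝ (Fin d → ℝ) ℂ g) x k) _
  rw [integral_add i1 i2, _root_.add_apply, ContinuousLinearMap.integral_apply i1,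
    ContinuousLinearMap.integral_apply i2, add_comm]
  simp only [_root_.smul_apply, hosc, smul_eq_mul, mul_comm (oscInt _ _ _)]

end
end

section
/- Left Moyal multiplication is an integral operator with explicit kernel: for all f, ψ ∈ 𝓢(ℝ^d) and all x ∈ ℝ^d, (f ⋆ ψ)(x) = (π^d det Θ)^{-1} ∫_{ℝ^d} ( ∫_{ℝ^d} f(z) e^{ i⟨x−y, Θ^{-1}(x+y)⟩ + 2i⟨z, Θ^{-1}(x−y)⟩ } dz ) ψ(y) dy, where both integrals converge absolutely (note det Θ > 0 since Θ is skew-symmetric, invertible and d is even). -/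
/-!
The substitution `z = x + ½Θk`, whose Jacobian is `2^{-d} |det Θ|`, followed by the translation
`y ↦ x + y`, turns the iterated integral defining the Moyal product into
`∫ z, ∫ y, f z * ψ y * e^{2i⟨Θ⁻¹(z - x), y - x⟩}`. Since `Θ⁻¹` is skew-symmetric, the phase equals
`⟨x - y, Θ⁻¹(x + y)⟩ + 2⟨z, Θ⁻¹(x - y)⟩`. The modulus of the integrand is `|f z| |ψ y|`, so Fubini
applies and gives both the integrability claims and the exchange of the two integrals.

Positivity of `det Θ`: for skew-symmetric `Θ` and `0 < t`, the matrix `tI + Θ` is injective because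
`⟨v, (tI + Θ)v⟩ = t‖v‖²`. So the determinant has no zero along the segment from `Θ` to `I`, and it
has the sign of `det I = 1` throughout.
-/

open MeasureTheory Real Matrix

noncomputable section

/-- The determinant does not vanish on the segment from `A` to `1`, since
`v ⬝ᵥ (t • 1 + (1 - t) • A) *ᵥ v = t * (v ⬝ᵥ v)` for skew-symmetric `A`. -/
theorem det_pos_of_skew {n : Type*} [Fintype n] [DecidableEq n] (A : Matrix n n ℝ)
    (hskew : Aᵀ = -A) (hdet : A.det ≠ 0) : 0 < A.det := by
  have hquad : ∀ v : n → ℝ, v ⬝ᵥ A *ᵥ v = 0 := by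
    intro v
    have h : v ⬝ᵥ A *ᵥ v = -(v ⬝ᵥ A *ᵥ v) := by
      calc v ⬝ᵥ A *ᵥ v = v ᵥ* A ⬝ᵥ v := dotProduct_mulVec _ _ _
        _ = Aᵀ *ᵥ v ⬝ᵥ v := by rw [mulVec_transpose]
        _ = -(v ⬝ᵥ A *ᵥ v) := by rw [hskew, neg_mulVec, neg_dotProduct, dotProduct_comm]
    linarith
  have hne : ∀ t ∈ Set.Icc (0 : ℝ) 1, (t • (1 : Matrix n n ℝ) + (1 - t) • A).det ≠ 0 := by
    intro t ht h0
    rcases ht.1.eq_or_lt with rfl | htpos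
    · simp [hdet] at h0
    · obtain ⟨v, hv, hv0⟩ := exists_mulVec_eq_zero_iff.mpr h0
      have h1 : v ⬝ᵥ (t • (1 : Matrix n n ℝ) + (1 - t) • A) *ᵥ v = 0 := by rw [hv0]; simp
      rw [add_mulVec, smul_mulVec, smul_mulVec, one_mulVec, dotProduct_add, dotProduct_smul,
        dotProduct_smul, hquad, smul_zero, add_zero, smul_eq_mul] at h1
      rcases mul_eq_zero.mp h1 with h | h
      · exact htpos.ne' h
      · exact hv (dotProduct_self_eq_zero.mp h)
  have hcont : Continuous fun t : ℝ => (t • (1 : Matrix n n ℝ) + (1 - t) • A).det := by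
    fun_prop
  by_contra hle
  have hmem : (0 : ℝ) ∈ Set.Icc ((0 : ℝ) • (1 : Matrix n n ℝ) + (1 - (0 : ℝ)) • A).det
      ((1 : ℝ) • (1 : Matrix n n ℝ) + (1 - (1 : ℝ)) • A).det := by
    simpa using not_lt.mp hle
  obtain ⟨t, ht, h0⟩ := intermediate_value_Icc zero_le_one hcont.continuousOn hmem
  exact hne t ht h0

theorem continuous_dotR {X : Type*} [TopologicalSpace X] {d : ℕ} {u v : X → Fin d → ℝ}
    (hu : Continuous u) (hv : Continuous v) : Continuous fun q => dotR (u q) (v q) := by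
  unfold dotR
  fun_prop

theorem integrable_mul_phase {X : Type*} [TopologicalSpace X] [MeasurableSpace X]
    [OpensMeasurableSpace X] {μ : Measure X} {g : X → ℂ} (hg : Integrable g μ) {p : X → ℝ}
    (hp : Continuous p) : Integrable (fun q => g q * Complex.exp (Complex.I * (p q : ℂ))) μ := by
  refine hg.mul_bdd (c := 1) ?_ (.of_forall fun q => ?_)
  · exact Continuous.aestronglyMeasurable (by fun_prop)
  · rw [mul_comm, Complex.norm_exp_ofReal_mul_I]

/-- Affine change of variables; integrability of `G` is used only for its measurability. -/
theorem integral_comp_add_mulVec {d : ℕ} {M : Matrix (Fin d) (Fin d) ℝ} (hM : M.det ≠ 0)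
    {G : (Fin d → ℝ) → ℂ} (hG : Integrable G) (x : Fin d → ℝ) :
    ∫ k, G (x + M *ᵥ k) = |M.det|⁻¹ • ∫ z, G z := by
  have hGx : Integrable fun z => G (x + z) := hG.comp_add_left x
  have hmap := Real.map_matrix_volume_pi_eq_smul_volume_pi hM
  have h := integral_map (μ := volume) (φ := toLin' M)
    (LinearMap.continuous_of_finiteDimensional _).aemeasurable (f := fun z => G (x + z))
    (by rw [hmap]; exact hGx.aestronglyMeasurable.smul_measure _)
  rw [hmap, integral_smul_measure, integral_add_left_eq_self G x,
    ENNReal.toReal_ofReal (abs_nonneg _), abs_inv] at h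
  simpa [toLin'_apply] using h.symm

/-- The phase of the Moyal product in the variables `z = x + ½Θk` and `y`: with
`k = 2Θ⁻¹(z - x)`, the number `⟨k, y - x⟩` is the phase of the kernel. -/
theorem phase_eq {d : ℕ} (Θ : Matrix (Fin d) (Fin d) ℝ) (hskew : Θᵀ = -Θ) (hdet : Θ.det ≠ 0)
    (x y k : Fin d → ℝ) :
    dotR (x - y) (Θ⁻¹ *ᵥ (x + y)) + 2 * dotR (x + (2 : ℝ)⁻¹ • Θ *ᵥ k) (Θ⁻¹ *ᵥ (x - y))
      = dotR k (y - x) := by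
  change (x - y) ⬝ᵥ (Θ⁻¹ *ᵥ (x + y)) + 2 * ((x + (2 : ℝ)⁻¹ • Θ *ᵥ k) ⬝ᵥ (Θ⁻¹ *ᵥ (x - y)))
      = k ⬝ᵥ (y - x)
  have hu : IsUnit Θ.det := isUnit_iff_ne_zero.mpr hdet
  have hanti : ∀ u v : Fin d → ℝ, u ⬝ᵥ Θ⁻¹ *ᵥ v = -(v ⬝ᵥ Θ⁻¹ *ᵥ u) := by
    intro u v
    have hinv : (Θ⁻¹)ᵀ = -Θ⁻¹ := by
      rw [transpose_nonsing_inv, hskew]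
      exact inv_eq_left_inv (by rw [neg_mul_neg, nonsing_inv_mul _ hu])
    rw [dotProduct_mulVec, ← mulVec_transpose, hinv, neg_mulVec, neg_dotProduct, dotProduct_comm]
  have hk : ∀ v : Fin d → ℝ, (Θ *ᵥ k) ⬝ᵥ Θ⁻¹ *ᵥ v = -(k ⬝ᵥ v) := by
    intro v
    rw [hanti, mulVec_mulVec, nonsing_inv_mul _ hu, one_mulVec, dotProduct_comm]
  have hx := hanti x x
  have hy := hanti y y
  have hxy := hanti x y
  simp only [mulVec_add, mulVec_sub, dotProduct_add, dotProduct_sub, sub_dotProduct,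
    add_dotProduct, smul_dotProduct, hk, smul_eq_mul]
  linarith

/-- Left Moyal multiplication is an integral operator with explicit kernel:
`(f ⋆ ψ)(x) = (π^d det Θ)⁻¹ ∫ y (∫ z f(z) e^{i⟨x−y,Θ⁻¹(x+y)⟩ + 2i⟨z,Θ⁻¹(x−y)⟩} dz) ψ(y) dy`,
with both integrals absolutely convergent, and `det Θ > 0`. -/
theorem moyal_left_kernel {d : ℕ} (hd : Even d) (hd2 : 2 ≤ d)
    (Θ : Matrix (Fin d) (Fin d) ℝ) (hskew : Θᵀ = -Θ) (hdet : Θ.det ≠ 0)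
    (f ψ : SchwartzMap ((Fin d) → ℝ) ℂ) (x : Fin d → ℝ) :
    0 < Θ.det ∧
    (∀ y : Fin d → ℝ, Integrable (fun z : Fin d → ℝ =>
        f z * Complex.exp (Complex.I *
          ((dotR (x - y) ((Θ⁻¹).mulVec (x + y))
            + 2 * dotR z ((Θ⁻¹).mulVec (x - y)) : ℝ) : ℂ)))) ∧
    Integrable (fun y : Fin d → ℝ =>
        (∫ z : Fin d → ℝ, f z * Complex.exp (Complex.I *
          ((dotR (x - y) ((Θ⁻¹).mulVec (x + y))
            + 2 * dotR z ((Θ⁻¹).mulVec (x - y)) : ℝ) : ℂ))) * ψ y) ∧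
    moyal Θ ⇑f ⇑ψ x = ((π ^ d * Θ.det : ℝ)⁻¹ : ℝ) •
      ∫ y : Fin d → ℝ,
        (∫ z : Fin d → ℝ, f z * Complex.exp (Complex.I *
          ((dotR (x - y) ((Θ⁻¹).mulVec (x + y))
            + 2 * dotR z ((Θ⁻¹).mulVec (x - y)) : ℝ) : ℂ))) * ψ y := by
  have hpos := det_pos_of_skew Θ hskew hdet
  have hf : Integrable (⇑f : (Fin d → ℝ) → ℂ) := f.integrable
  have hψ : Integrable (⇑ψ : (Fin d → ℝ) → ℂ) := ψ.integrable
  set P : (Fin d → ℝ) → (Fin d → ℝ) → ℝ := fun z y =>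
    dotR (x - y) (Θ⁻¹ *ᵥ (x + y)) + 2 * dotR z (Θ⁻¹ *ᵥ (x - y)) with hP
  have hPcont : Continuous fun q : (Fin d → ℝ) × (Fin d → ℝ) => P q.1 q.2 :=
    (continuous_dotR (by fun_prop) (by fun_prop)).add
      (continuous_const.mul (continuous_dotR (by fun_prop) (by fun_prop)))
  set F : (Fin d → ℝ) → (Fin d → ℝ) → ℂ := fun z y =>
    f z * ψ y * Complex.exp (Complex.I * (P z y : ℂ)) with hF
  have hFint : Integrable (fun q : (Fin d → ℝ) × (Fin d → ℝ) => F q.1 q.2)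
      (volume.prod volume) := integrable_mul_phase (hf.mul_prod hψ) hPcont
  have hinner : ∀ y, (∫ z, f z * Complex.exp (Complex.I * (P z y : ℂ))) * ψ y = ∫ z, F z y := by
    intro y
    rw [← integral_mul_const]
    refine integral_congr_ae (.of_forall fun z => ?_)
    simp only [hF]
    ring
  refine ⟨hpos, fun y => integrable_mul_phase hf
    (hPcont.comp (continuous_id.prodMk continuous_const)), ?_, ?_⟩
  · exact hFint.integral_prod_right.congr (.of_forall fun y => (hinner y).symm)
  · have hM : ((2 : ℝ)⁻¹ • Θ).det = ((2 : ℝ) ^ d)⁻¹ * Θ.det := by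
      rw [det_smul, Fintype.card_fin, inv_pow]
    have hM0 : ((2 : ℝ)⁻¹ • Θ).det ≠ 0 := by rw [hM]; positivity
    have hsub : ∀ k : Fin d → ℝ,
        ∫ y, f (x + (2 : ℝ)⁻¹ • Θ *ᵥ k) * ψ (x + y) * Complex.exp (Complex.I * (dotR k y : ℂ))
          = ∫ y, F (x + ((2 : ℝ)⁻¹ • Θ) *ᵥ k) y := by
      intro k
      rw [← integral_add_left_eq_self (fun y => F (x + ((2 : ℝ)⁻¹ • Θ) *ᵥ k) y) x]
      refine integral_congr_ae (.of_forall fun y => ?_)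
      simp only [hF, hP, smul_mulVec]
      rw [phase_eq Θ hskew hdet, add_sub_cancel_left]
    have hright : ∫ y, (∫ z, f z * Complex.exp (Complex.I * (P z y : ℂ))) * ψ y
        = ∫ z, ∫ y, F z y := by
      rw [integral_integral_swap hFint]
      exact integral_congr_ae (.of_forall hinner)
    rw [hright, moyal, integral_congr_ae (.of_forall hsub),
      integral_comp_add_mulVec hM0 (G := fun z => ∫ y, F z y) hFint.integral_prod_left, smul_smul]
    congr 1
    rw [hM, abs_of_pos (by positivity), mul_pow]
    field_simp

end
end

section
/- Moyal square of a Gaussian: let A be a symmetric positive-definite real d×d matrix commuting with Θ, and set g_A(x) := exp(−⟨x, A x⟩). Then Id + Θᵗ A² Θ is positive definite, B := 2A (Id + Θᵗ A² Θ)^{-1} is symmetric positive definite, and g_A ⋆ g_A = (det(Id + Θᵗ A² Θ))^{-1/2} g_B as functions on ℝ^d. -/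
/-!
With `M = A⁻¹ + Θᵀ A Θ`, which is positive definite, commutation of `A` with `Θ` gives
`1 + Θᵀ A² Θ = A M = M A`, hence `2 A (1 + Θᵀ A² Θ)⁻¹ = 2 M⁻¹`; this settles both positivity
claims. For the product, `integral_gaussian_matrix` evaluates Gaussian integrals
`∫ exp (-b ⟨k, M k⟩ + ⟨u + i v, k⟩) dk` and is used twice. The `y`-integral, with `b = 1` and matrix
`A`, turns the remaining integrand into a constant multiple of
`exp (-¼ ⟨k, M k⟩ + ⟨Θ A x - i x, k⟩)`. The `k`-integral, with `b = ¼` and matrix `M`, then produces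
the exponent `-⟨x, A x⟩ + ⟨Θ A x, M⁻¹ Θ A x⟩ - ⟨x, M⁻¹ x⟩` and the phase
`-2 ⟨Θ A x, M⁻¹ x⟩`. The phase vanishes because `Θ A M⁻¹` is skew-symmetric, and
`⟨Θ A x, M⁻¹ Θ A x⟩ = ⟨x, A x⟩ - ⟨x, M⁻¹ x⟩` because `Θᵀ A Θ = M - A⁻¹`, leaving `-2 ⟨x, M⁻¹ x⟩`.
The powers of `π` and `2` cancel, and `det A * det M` is the determinant of `1 + Θᵀ A² Θ`.
-/


open MeasureTheory Real Matrix

noncomputable section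

theorem dotR_eq_dotProduct {d : ℕ} (x y : Fin d → ℝ) : dotR x y = x ⬝ᵥ y := rfl

/-- Linear change of variables `k ↦ R k` for Lebesgue measure on `ℝ^d`. No integrability is
needed, since `R` is invertible. -/
theorem integral_comp_mulVec {d : ℕ} (R : Matrix (Fin d) (Fin d) ℝ) (hR : R.det ≠ 0)
    (h : (Fin d → ℝ) → ℂ) :
    ∫ k : Fin d → ℝ, h (R *ᵥ k) = |R.det|⁻¹ • ∫ k : Fin d → ℝ, h k := by
  have hmap := Real.map_matrix_volume_pi_eq_smul_volume_pi hR
  have hcont : Continuous (toLin' R) := (toLin' R).continuous_of_finiteDimensional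
  have hinj : Function.Injective (toLin' R) := by
    intro x y hxy
    simpa [Matrix.mulVec_injective_iff_isUnit.2 ((isUnit_iff_isUnit_det R).2 hR.isUnit) |>.eq_iff]
      using hxy
  have hemb : MeasurableEmbedding (toLin' R) := hcont.measurableEmbedding hinj
  have := hemb.integral_map (μ := volume) h
  rw [hmap, integral_smul_measure, ENNReal.toReal_ofReal (abs_nonneg _), abs_inv] at this
  rw [this]
  simp

theorem commute_inv {d : ℕ} {X N : Matrix (Fin d) (Fin d) ℝ} (hN : IsUnit N.det)
    (h : Commute X N) : Commute X N⁻¹ := by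
  calc X * N⁻¹ = N⁻¹ * (N * X) * N⁻¹ := by rw [← mul_assoc, nonsing_inv_mul _ hN, one_mul]
    _ = N⁻¹ * X := by
      rw [← h.eq, mul_assoc, mul_assoc, mul_nonsing_inv _ hN, mul_one]

/-- The real symmetric case of the Gaussian integral with a complex linear term, whose real and
imaginary parts `u` and `v` are kept apart so that only real matrices occur. A factorization
`M = Rᵀ R` turns the integral into the one for the standard quadratic form. -/
theorem integral_gaussian_matrix {d : ℕ} {M : Matrix (Fin d) (Fin d) ℝ} (hM : M.PosDef) {b : ℝ}
    (hb : 0 < b) (u v : Fin d → ℝ) :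
    ∫ k : Fin d → ℝ, Complex.exp (((-b * (k ⬝ᵥ M *ᵥ k) + u ⬝ᵥ k : ℝ) : ℂ)
        + Complex.I * ((v ⬝ᵥ k : ℝ) : ℂ))
      = (((π / b) ^ ((d : ℝ) / 2) * (√M.det)⁻¹ *
          Real.exp ((u ⬝ᵥ M⁻¹ *ᵥ u - v ⬝ᵥ M⁻¹ *ᵥ v) / (4 * b)) : ℝ) : ℂ)
        * Complex.exp (Complex.I * ((u ⬝ᵥ M⁻¹ *ᵥ v / (2 * b) : ℝ) : ℂ)) := by
  obtain ⟨R, hR⟩ : ∃ R : Matrix (Fin d) (Fin d) ℝ, M = Rᵀ * R := by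
    open scoped MatrixOrder in
    obtain ⟨R, hR⟩ := CStarAlgebra.nonneg_iff_eq_star_mul_self.mp hM.posSemidef.nonneg
    exact ⟨R, by rw [hR, star_eq_conjTranspose, conjTranspose_eq_transpose_of_trivial]⟩
  have hdet : M.det = R.det ^ 2 := by rw [hR, det_mul, det_transpose, sq]
  have hR0 : R.det ≠ 0 := by
    intro h
    have := hM.det_pos
    simp [hdet, h] at this
  have hRu : IsUnit R.det := hR0.isUnit
  have hinv : M⁻¹ = R⁻¹ * (R⁻¹)ᵀ := by rw [hR, Matrix.mul_inv_rev, transpose_nonsing_inv]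
  have hlin (w k : Fin d → ℝ) : w ⬝ᵥ k = ((R⁻¹)ᵀ *ᵥ w) ⬝ᵥ (R *ᵥ k) := by
    rw [dotProduct_mulVec, mulVec_transpose, vecMul_vecMul, Matrix.nonsing_inv_mul _ hRu,
      vecMul_one]
  have hquad (w z : Fin d → ℝ) : w ⬝ᵥ M⁻¹ *ᵥ z = ((R⁻¹)ᵀ *ᵥ w) ⬝ᵥ ((R⁻¹)ᵀ *ᵥ z) := by
    rw [hinv, ← mulVec_mulVec, dotProduct_mulVec, mulVec_transpose, mulVec_transpose]
  have hMk (k : Fin d → ℝ) : k ⬝ᵥ M *ᵥ k = (R *ᵥ k) ⬝ᵥ (R *ᵥ k) := by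
    rw [hR, ← mulVec_mulVec, dotProduct_mulVec, vecMul_transpose]
  have hint₀ (k : Fin d → ℝ) : ((-b * (k ⬝ᵥ M *ᵥ k) + u ⬝ᵥ k : ℝ) : ℂ)
        + Complex.I * ((v ⬝ᵥ k : ℝ) : ℂ) =
      ((-b * ((R *ᵥ k) ⬝ᵥ (R *ᵥ k)) + ((R⁻¹)ᵀ *ᵥ u) ⬝ᵥ (R *ᵥ k) : ℝ) : ℂ)
        + Complex.I * ((((R⁻¹)ᵀ *ᵥ v) ⬝ᵥ (R *ᵥ k) : ℝ) : ℂ) := by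
    rw [hMk, hlin u, hlin v]
  simp_rw [hint₀]
  rw [hquad, hquad, hquad]
  generalize (R⁻¹)ᵀ *ᵥ u = p
  generalize (R⁻¹)ᵀ *ᵥ v = q
  rw [integral_comp_mulVec R hR0 (fun k => Complex.exp (((-b * (k ⬝ᵥ k) + p ⬝ᵥ k : ℝ) : ℂ)
        + Complex.I * ((q ⬝ᵥ k : ℝ) : ℂ)))]
  have key := GaussianFourier.integral_cexp_neg_mul_sum_add (b := (b : ℂ)) (by simpa using hb)
    (fun i => (p i : ℂ) + Complex.I * q i)
  have hint : ∀ k : Fin d → ℝ, ((-b * (k ⬝ᵥ k) + p ⬝ᵥ k : ℝ) : ℂ)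
        + Complex.I * ((q ⬝ᵥ k : ℝ) : ℂ) =
      -(b : ℂ) * ∑ i, (k i : ℂ) ^ 2 + ∑ i, ((p i : ℂ) + Complex.I * q i) * k i := by
    intro k
    simp only [dotProduct, add_mul, Finset.sum_add_distrib]
    push_cast
    simp only [sq, Finset.mul_sum, mul_assoc, add_assoc]
  have hsum : ∑ i, ((p i : ℂ) + Complex.I * q i) ^ 2 =
      ((p ⬝ᵥ p - q ⬝ᵥ q : ℝ) : ℂ) + 2 * Complex.I * ((p ⬝ᵥ q : ℝ) : ℂ) := by
    simp only [dotProduct]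
    push_cast
    rw [Finset.mul_sum, ← Finset.sum_sub_distrib, ← Finset.sum_add_distrib]
    refine Finset.sum_congr rfl fun i _ => ?_
    linear_combination (q i : ℂ) ^ 2 * Complex.I_sq
  simp_rw [hint, key, hsum]
  have hpow : ((π : ℂ) / b) ^ ((Fintype.card (Fin d) : ℂ) / 2) =
      (((π / b) ^ ((d : ℝ) / 2) : ℝ) : ℂ) := by
    rw [Complex.ofReal_cpow (by positivity)]
    simp
  have hsqrt : √M.det = |R.det| := by rw [hdet, Real.sqrt_sq_eq_abs]
  have hbc : (b : ℂ) ≠ 0 := by exact_mod_cast hb.ne'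
  have hexp : (((p ⬝ᵥ p - q ⬝ᵥ q : ℝ) : ℂ) + 2 * Complex.I * ((p ⬝ᵥ q : ℝ) : ℂ)) / (4 * b) =
      (((p ⬝ᵥ p - q ⬝ᵥ q) / (4 * b) : ℝ) : ℂ) + Complex.I * ((p ⬝ᵥ q / (2 * b) : ℝ) : ℂ) := by
    push_cast
    field_simp
    ring
  rw [hpow, hsqrt, hexp, Complex.exp_add, Complex.real_smul]
  push_cast
  ring

/-- Moyal square of a Gaussian: for `A` symmetric positive definite
commuting with `Θ` and `g_A(x) = exp(−⟨x,Ax⟩)`, the matrix `1 + Θᵀ A² Θ` is positive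
definite, `B = 2A(1 + Θᵀ A² Θ)⁻¹` is symmetric positive definite, and
`g_A ⋆ g_A = det(1 + Θᵀ A² Θ)^{-1/2} g_B`. -/
theorem moyal_gaussian_square {d : ℕ} (hd : Even d) (hd2 : 2 ≤ d)
    (Θ : Matrix (Fin d) (Fin d) ℝ) (hskew : Θᵀ = -Θ) (hdet : Θ.det ≠ 0)
    (A : Matrix (Fin d) (Fin d) ℝ) (hA : A.PosDef) (hcomm : A * Θ = Θ * A) :
    ((1 : Matrix (Fin d) (Fin d) ℝ) + Θᵀ * A ^ 2 * Θ).PosDef ∧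
    ((2 : ℝ) • (A * ((1 : Matrix (Fin d) (Fin d) ℝ) + Θᵀ * A ^ 2 * Θ)⁻¹)).PosDef ∧
    ∀ x : Fin d → ℝ,
      moyal Θ (fun y => (Real.exp (-(dotR y (A.mulVec y))) : ℂ))
        (fun y => (Real.exp (-(dotR y (A.mulVec y))) : ℂ)) x
      = ((Real.sqrt (((1 : Matrix (Fin d) (Fin d) ℝ) + Θᵀ * A ^ 2 * Θ).det))⁻¹ : ℝ) *
        (Real.exp (-(dotR x
          ((((2 : ℝ) • (A * ((1 : Matrix (Fin d) (Fin d) ℝ) + Θᵀ * A ^ 2 * Θ)⁻¹)).mulVec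
            x)))) : ℂ) := by
  set S := (1 : Matrix (Fin d) (Fin d) ℝ) + Θᵀ * A ^ 2 * Θ with hS
  -- `M` is four times the quadratic form left in the `k`-integral once `y` is integrated out.
  set M := A⁻¹ + Θᵀ * A * Θ with hMdef
  have hAu : IsUnit A.det := hA.det_pos.ne'.isUnit
  have hAT : Aᵀ = A := by
    rw [← conjTranspose_eq_transpose_of_trivial]; exact hA.isHermitian
  have hMpos : M.PosDef := by
    refine hA.inv.add_posSemidef ?_
    simpa [conjTranspose_eq_transpose_of_trivial] using
      hA.posSemidef.conjTranspose_mul_mul_same Θ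
  have hMu : IsUnit M.det := hMpos.det_pos.ne'.isUnit
  have hMT : Mᵀ = M := by
    rw [← conjTranspose_eq_transpose_of_trivial]; exact hMpos.isHermitian
  have hAΘ : Commute A Θ := hcomm
  have hAM : Commute A M := by
    refine (commute_inv hAu (Commute.refl A)).add_right ?_
    rw [hskew]
    exact ((hAΘ.neg_right).mul_right (Commute.refl A)).mul_right hAΘ
  have hΘM : Commute Θ M := by
    refine (commute_inv hAu hAΘ.symm).add_right ?_
    rw [hskew]
    exact (((Commute.refl Θ).neg_right).mul_right hAΘ.symm).mul_right (Commute.refl Θ)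
  have hΘTA : Θᵀ * A = A * Θᵀ := by rw [hskew]; exact hAΘ.symm.neg_left
  have hSAM : S = A * M := by
    rw [hS, hMdef, mul_add, mul_nonsing_inv _ hAu, sq]
    rw [← mul_assoc, ← mul_assoc, ← mul_assoc, hΘTA]
  have hSinv : A * S⁻¹ = M⁻¹ := by
    rw [hSAM, hAM.eq, Matrix.mul_inv_rev, ← mul_assoc, mul_nonsing_inv _ hAu, one_mul]
  have hSpos : S.PosDef := by
    refine PosDef.one.add_posSemidef ?_
    simpa [conjTranspose_eq_transpose_of_trivial] using
      (hA.posSemidef.pow 2).conjTranspose_mul_mul_same Θ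
  refine ⟨hSpos, ?_, fun x => ?_⟩
  · rw [hSinv]
    exact hMpos.inv.smul (by norm_num)
  rw [hSinv]
  have hdetS : S.det = A.det * M.det := by rw [hSAM, det_mul]
  have hAinv : A⁻¹ *ᵥ A *ᵥ x = x := by
    rw [mulVec_mulVec, nonsing_inv_mul _ hAu, one_mulVec]
  have hAsymm (y z : Fin d → ℝ) : y ⬝ᵥ A *ᵥ z = (A *ᵥ y) ⬝ᵥ z := by
    rw [dotProduct_mulVec, ← mulVec_transpose, hAT]
  have hΘdot (y z : Fin d → ℝ) : y ⬝ᵥ Θ *ᵥ z = -((Θ *ᵥ y) ⬝ᵥ z) := by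
    rw [dotProduct_mulVec, ← mulVec_transpose, hskew, neg_mulVec, neg_dotProduct]
  have hMinvsymm (y z : Fin d → ℝ) : y ⬝ᵥ M⁻¹ *ᵥ z = (M⁻¹ *ᵥ y) ⬝ᵥ z := by
    rw [dotProduct_mulVec, ← mulVec_transpose, transpose_nonsing_inv, hMT]
  have integral_y (k : Fin d → ℝ) :
      ∫ y : Fin d → ℝ,
        (Real.exp (-(dotR (x + (2 : ℝ)⁻¹ • Θ *ᵥ k) (A *ᵥ (x + (2 : ℝ)⁻¹ • Θ *ᵥ k)))) : ℂ) *
          (Real.exp (-(dotR (x + y) (A *ᵥ (x + y)))) : ℂ) *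
          Complex.exp (Complex.I * (dotR k y : ℂ)) =
      ((π ^ ((d : ℝ) / 2) * (√A.det)⁻¹ * Real.exp (-(x ⬝ᵥ A *ᵥ x)) : ℝ) : ℂ) *
        Complex.exp (((-(1 / 4 : ℝ) * (k ⬝ᵥ M *ᵥ k) + (Θ *ᵥ A *ᵥ x) ⬝ᵥ k : ℝ) : ℂ)
          + Complex.I * (((-x) ⬝ᵥ k : ℝ) : ℂ)) := by
    have hint (y : Fin d → ℝ) :
        (Real.exp (-(dotR (x + (2 : ℝ)⁻¹ • Θ *ᵥ k) (A *ᵥ (x + (2 : ℝ)⁻¹ • Θ *ᵥ k)))) : ℂ) *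
          (Real.exp (-(dotR (x + y) (A *ᵥ (x + y)))) : ℂ) *
          Complex.exp (Complex.I * (dotR k y : ℂ)) =
        (Real.exp (-(dotR (x + (2 : ℝ)⁻¹ • Θ *ᵥ k) (A *ᵥ (x + (2 : ℝ)⁻¹ • Θ *ᵥ k))) -
            x ⬝ᵥ A *ᵥ x) : ℂ) *
          Complex.exp (((-1 * (y ⬝ᵥ A *ᵥ y) + ((-2 : ℝ) • A *ᵥ x) ⬝ᵥ y : ℝ) : ℂ)
            + Complex.I * ((k ⬝ᵥ y : ℝ) : ℂ)) := by
      have h : -(dotR (x + y) (A *ᵥ (x + y))) =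
          -(x ⬝ᵥ A *ᵥ x) + (-1 * (y ⬝ᵥ A *ᵥ y) + ((-2 : ℝ) • A *ᵥ x) ⬝ᵥ y) := by
        rw [dotR_eq_dotProduct, mulVec_add, dotProduct_add, add_dotProduct, add_dotProduct,
          hAsymm x y, dotProduct_comm y (A *ᵥ x), smul_dotProduct, smul_eq_mul]
        ring
      rw [h, dotR_eq_dotProduct k y]
      simp only [Complex.ofReal_exp, ← Complex.exp_add]
      congr 1
      push_cast
      ring
    simp_rw [hint]
    rw [integral_const_mul, integral_gaussian_matrix hA one_pos, div_one, mulVec_smul, hAinv]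
    have hq : dotR (x + (2 : ℝ)⁻¹ • Θ *ᵥ k) (A *ᵥ (x + (2 : ℝ)⁻¹ • Θ *ᵥ k)) =
        x ⬝ᵥ A *ᵥ x - (Θ *ᵥ A *ᵥ x) ⬝ᵥ k + 1 / 4 * (k ⬝ᵥ (Θᵀ * A * Θ) *ᵥ k) := by
      have h1 : k ⬝ᵥ (Θᵀ * A * Θ) *ᵥ k = (Θ *ᵥ k) ⬝ᵥ A *ᵥ Θ *ᵥ k := by
        rw [← mulVec_mulVec, ← mulVec_mulVec, dotProduct_mulVec, vecMul_transpose]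
      have h2 : x ⬝ᵥ A *ᵥ Θ *ᵥ k = -((Θ *ᵥ A *ᵥ x) ⬝ᵥ k) := by
        rw [hAsymm, hΘdot]
      have h3 : (Θ *ᵥ k) ⬝ᵥ A *ᵥ x = -((Θ *ᵥ A *ᵥ x) ⬝ᵥ k) := by
        rw [dotProduct_comm, hΘdot]
      rw [dotR_eq_dotProduct, mulVec_add, mulVec_smul, dotProduct_add, add_dotProduct,
        add_dotProduct, dotProduct_smul, dotProduct_smul, smul_dotProduct, smul_dotProduct,
        h1, h2, h3]
      simp only [smul_eq_mul]
      ring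
    have hMk : k ⬝ᵥ M *ᵥ k = k ⬝ᵥ A⁻¹ *ᵥ k + k ⬝ᵥ (Θᵀ * A * Θ) *ᵥ k := by
      rw [hMdef, add_mulVec, dotProduct_add]
    have hAk : ((-2 : ℝ) • A *ᵥ x) ⬝ᵥ A⁻¹ *ᵥ k = -2 * (x ⬝ᵥ k) := by
      rw [smul_dotProduct, ← hAsymm, mulVec_mulVec, mul_nonsing_inv _ hAu, one_mulVec,
        smul_eq_mul]
    rw [hq, hMk, hAk]
    simp only [smul_dotProduct, dotProduct_smul, neg_dotProduct, smul_eq_mul]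
    rw [dotProduct_comm (A *ᵥ x) x]
    push_cast
    simp only [mul_assoc, mul_left_comm (Complex.exp _), ← Complex.exp_add]
    congr 3
    ring
  have hΘMinv (z : Fin d → ℝ) : Θ *ᵥ M⁻¹ *ᵥ z = M⁻¹ *ᵥ Θ *ᵥ z := by
    rw [mulVec_mulVec, mulVec_mulVec, (commute_inv hMu hΘM).eq]
  have hAMinv (z : Fin d → ℝ) : A *ᵥ M⁻¹ *ᵥ z = M⁻¹ *ᵥ A *ᵥ z := by
    rw [mulVec_mulVec, mulVec_mulVec, (commute_inv hMu hAM).eq]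
  have hAΘv (z : Fin d → ℝ) : A *ᵥ Θ *ᵥ z = Θ *ᵥ A *ᵥ z := by
    rw [mulVec_mulVec, mulVec_mulVec, hcomm]
  -- `Θ A M⁻¹` is skew-symmetric, being a product of commuting factors of which only `Θ` is skew.
  have cross : (Θ *ᵥ A *ᵥ x) ⬝ᵥ M⁻¹ *ᵥ (-x) = 0 := by
    have h : (Θ *ᵥ A *ᵥ x) ⬝ᵥ M⁻¹ *ᵥ x = -((Θ *ᵥ A *ᵥ x) ⬝ᵥ M⁻¹ *ᵥ x) := by
      calc (Θ *ᵥ A *ᵥ x) ⬝ᵥ M⁻¹ *ᵥ x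
          = -((A *ᵥ x) ⬝ᵥ Θ *ᵥ M⁻¹ *ᵥ x) := by rw [hΘdot, neg_neg]
        _ = -(x ⬝ᵥ M⁻¹ *ᵥ Θ *ᵥ A *ᵥ x) := by rw [← hAsymm, hΘMinv, hAMinv, hAΘv]
        _ = -((Θ *ᵥ A *ᵥ x) ⬝ᵥ M⁻¹ *ᵥ x) := by rw [hMinvsymm, dotProduct_comm]
    rw [mulVec_neg, dotProduct_neg]
    linarith
  have square : (Θ *ᵥ A *ᵥ x) ⬝ᵥ M⁻¹ *ᵥ (Θ *ᵥ A *ᵥ x) = x ⬝ᵥ A *ᵥ x - x ⬝ᵥ M⁻¹ *ᵥ x := by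
    have h1 : M *ᵥ A *ᵥ x = x - Θ *ᵥ A *ᵥ Θ *ᵥ A *ᵥ x := by
      rw [hMdef, add_mulVec, hAinv, hskew, ← mulVec_mulVec, ← mulVec_mulVec, neg_mulVec,
        sub_eq_add_neg]
    have h2 : A *ᵥ x = M⁻¹ *ᵥ x - M⁻¹ *ᵥ Θ *ᵥ A *ᵥ Θ *ᵥ A *ᵥ x := by
      rw [← mulVec_sub, ← h1, mulVec_mulVec _ M⁻¹ M, nonsing_inv_mul _ hMu, one_mulVec]
    have h3 : x ⬝ᵥ M⁻¹ *ᵥ Θ *ᵥ A *ᵥ Θ *ᵥ A *ᵥ x =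
        -((Θ *ᵥ A *ᵥ x) ⬝ᵥ M⁻¹ *ᵥ (Θ *ᵥ A *ᵥ x)) := by
      rw [← hΘdot (A *ᵥ x), ← hAsymm, hΘMinv, hAMinv, hAΘv (Θ *ᵥ A *ᵥ x)]
    have h4 := congrArg (x ⬝ᵥ ·) h2
    simp only [dotProduct_sub, h3] at h4
    linarith
  have hconst : ((2 * π) ^ d)⁻¹ * (π ^ ((d : ℝ) / 2) * (π / (1 / 4)) ^ ((d : ℝ) / 2)) = 1 := by
    rw [← Real.mul_rpow (by positivity) (by positivity),
      show π * (π / (1 / 4)) = (2 * π) ^ (2 : ℝ) by rw [Real.rpow_two]; ring,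
      ← Real.rpow_mul (by positivity), mul_div_cancel₀ _ two_ne_zero, Real.rpow_natCast]
    exact inv_mul_cancel₀ (by positivity)
  have hexp : Real.exp (-(x ⬝ᵥ A *ᵥ x)) *
      Real.exp ((x ⬝ᵥ A *ᵥ x - x ⬝ᵥ M⁻¹ *ᵥ x - (-x) ⬝ᵥ M⁻¹ *ᵥ (-x)) / (4 * (1 / 4))) =
      Real.exp (-(x ⬝ᵥ ((2 : ℝ) • M⁻¹) *ᵥ x)) := by
    rw [← Real.exp_add, smul_mulVec, dotProduct_smul, smul_eq_mul, mulVec_neg, neg_dotProduct_neg]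
    congr 1
    ring
  unfold moyal
  simp_rw [integral_y]
  rw [integral_const_mul, integral_gaussian_matrix hMpos (by norm_num : (0 : ℝ) < 1 / 4),
    cross, square, hdetS, Real.sqrt_mul hA.det_pos.le, dotR_eq_dotProduct]
  simp only [zero_div, Complex.ofReal_zero, mul_zero, Complex.exp_zero, mul_one,
    Complex.real_smul, ← Complex.ofReal_mul]
  rw [Complex.ofReal_inj, ← hexp, mul_inv]
  linear_combination ((√A.det)⁻¹ * (√M.det)⁻¹ * Real.exp (-(x ⬝ᵥ A *ᵥ x)) *
    Real.exp ((x ⬝ᵥ A *ᵥ x - x ⬝ᵥ M⁻¹ *ᵥ x - (-x) ⬝ᵥ M⁻¹ *ᵥ (-x)) / (4 * (1 / 4)))) * hconst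

end
end

section
/- Positivity of the Gaussian-weighted Moyal square: for every Ω̃ > 0, every t > 0 and every Schwartz function f ∈ 𝓢(ℝ^d), the integral ∫_{ℝ^d} (f̄ ⋆ f)(z) exp( −Ω̃ tanh(2Ω̃ t) ⟨z, G z⟩ ) dz is a nonnegative real number, where f̄ denotes the complex conjugate of f. -/
open MeasureTheory Real Matrix

noncomputable section

/-!
The weighted integral is rewritten as a quadratic form `∫∫ conj (f x) * f w * κ(x, w)` with a
positive-definite kernel `κ`.

Write `S = Θ⁻¹`, `a = Ω / 2`, `τ = tanh (2Ωt)`, `c = Ωτ`. Substituting `x = z + ½Θk`, `w = z + y` in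
the Moyal product turns the phase into `2 ⟨S(x - z), w - z⟩ = 2 ⟨Sx, w⟩ + ⟨z, 2S(w - x)⟩`
(`moyal_eq`; the last form uses that `S` is skew). Everything is then absolutely integrable in
`(z, x, w)`, so the `z`-integral can be done first. It is a Gaussian Fourier transform, computed with
the factorization `G⁻¹ = A Aᵀ`, `A = 1 + aΘ` (`gaussian_integral`), and gives, up to a positive
constant,
`κ(x, w) = exp (2i ⟨Sx, w⟩ - (|S(w - x)|² + a² |w - x|²) / c)`.

The sesquilinear part of this exponent is
`(2 / c) (⟨Sx, Sw⟩ + a² ⟨x, w⟩) + 2i ⟨Sx, w⟩`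
`= (2 / c) (τ ⟨Sx + iax, Sw + iaw⟩ + (1 - τ) (⟨Sx, Sw⟩ + a² ⟨x, w⟩))`,
which is a Gram form `⟨U x, U w⟩` because `0 < τ < 1` (`exponent_identity`). Hence
`κ(x, w) = exp (-|U x|² / 2 - |U w|² / 2 + ⟨U x, U w⟩)`, and expanding `exp ⟨U x, U w⟩` as a power
series exhibits the quadratic form as a limit of sums of squared moduli (`exp_kernel_nonneg`).
-/

/-! ### Exponentials of Gram kernels -/

/-- The normalized coherent-state kernel
`exp (-|U x|² / 2 - |U w|² / 2 + ⟨U x, U w⟩)` is positive definite: the `n`-th term of the power series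
of `exp ⟨U x, U w⟩` is a sum, over multi-indices `s : Fin n → ι`, of rank-one kernels
`conj (h n s x) * h n s w`, and the partial sums are dominated by `|f x| |f w|`. -/
theorem exp_kernel_nonneg {E ι : Type*} [MeasurableSpace E] [Fintype ι] {μ : Measure E} [SFinite μ]
    (U : E → ι → ℂ) (hU : ∀ j, Measurable fun x => U x j) {f : E → ℂ} (hf : Integrable f μ) :
    ∃ r : ℝ, 0 ≤ r ∧ ∫ p : E × E, starRingEnd ℂ (f p.1) * f p.2 *
      Complex.exp (-((∑ j, ‖U p.1 j‖ ^ 2) / 2 : ℝ) - ((∑ j, ‖U p.2 j‖ ^ 2) / 2 : ℝ)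
        + ∑ j, starRingEnd ℂ (U p.1 j) * U p.2 j) ∂(μ.prod μ) = (r : ℂ) := by
  set q : E → ℝ := fun x => (∑ j, ‖U x j‖ ^ 2) / 2 with hq
  have hqm : Measurable q := by fun_prop
  have hq0 : ∀ x, 0 ≤ q x := fun x => by positivity
  set H : E × E → ℂ := fun p => ∑ j, starRingEnd ℂ (U p.1 j) * U p.2 j with hH
  have hHm : Measurable H := by
    refine Finset.measurable_sum _ fun j _ => ?_
    exact (Complex.continuous_conj.measurable.comp ((hU j).comp measurable_fst)).mul
      ((hU j).comp measurable_snd)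
  have hHle : ∀ p, ‖H p‖ ≤ q p.1 + q p.2 := by
    intro p
    refine (norm_sum_le _ _).trans ?_
    simp only [hq, ← add_div, ← Finset.sum_add_distrib, Finset.sum_div]
    refine Finset.sum_le_sum fun j _ => ?_
    rw [norm_mul, RCLike.norm_conj]
    nlinarith [sq_nonneg (‖U p.1 j‖ - ‖U p.2 j‖)]
  set h : (n : ℕ) → (Fin n → ι) → E → ℂ :=
    fun n s x => f x * Complex.exp (-(q x : ℂ)) * ∏ i, U x (s i) with hh
  have hhint : ∀ n s, Integrable (h n s) μ := by
    intro n s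
    refine Integrable.mono' (hf.norm.mul_const (n.factorial * Real.exp (1 / 2))) ?_ ?_
    · refine (hf.1.mul ?_).mul ?_
      · exact (Complex.measurable_exp.comp
          (Complex.measurable_ofReal.comp hqm).neg).aestronglyMeasurable
      · exact (Finset.measurable_prod _ fun i _ => hU (s i)).aestronglyMeasurable
    · refine Filter.Eventually.of_forall fun x => ?_
      simp only [hh, norm_mul, norm_prod, mul_assoc]
      refine mul_le_mul_of_nonneg_left ?_ (norm_nonneg _)
      -- With `ρ = |U x|`, the monomial is at most `ρ ^ n ≤ n! e ^ ρ`, and `ρ ≤ ρ ^ 2 / 2 + 1 / 2`.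
      set ρ := √(2 * q x) with hρ
      have hρ0 : 0 ≤ ρ := Real.sqrt_nonneg _
      have hρ2 : ρ ^ 2 = 2 * q x := Real.sq_sqrt (by linarith [hq0 x])
      have h1 : ∀ j, ‖U x j‖ ≤ ρ := by
        intro j
        apply Real.le_sqrt_of_sq_le
        simp only [hq]
        rw [mul_div_cancel₀ _ (two_ne_zero)]
        exact Finset.single_le_sum (f := fun j => ‖U x j‖ ^ 2) (fun _ _ => by positivity)
          (Finset.mem_univ j)
      have h2 : ∏ i, ‖U x (s i)‖ ≤ ρ ^ n := by
        refine (Finset.prod_le_prod (fun _ _ => norm_nonneg _) fun i _ => h1 (s i)).trans ?_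
        simp
      have h3 : ρ ^ n ≤ n.factorial * Real.exp ρ := by
        have := Real.pow_div_factorial_le_exp (x := ρ) hρ0 n
        rwa [div_le_iff₀' (by positivity)] at this
      have h4 : ‖Complex.exp (-(q x : ℂ))‖ = Real.exp (-q x) := by
        rw [← Complex.ofReal_neg, Complex.norm_exp_ofReal]
      rw [h4]
      calc Real.exp (-q x) * ∏ i, ‖U x (s i)‖ ≤ Real.exp (-q x) * (n.factorial * Real.exp ρ) := by
            gcongr; exact h2.trans h3
        _ = n.factorial * Real.exp (-q x + ρ) := by rw [Real.exp_add]; ring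
        _ ≤ _ := by
            gcongr
            nlinarith [sq_nonneg (ρ - 1)]
  have hterm : ∀ n, ∀ p : E × E, starRingEnd ℂ (f p.1) * f p.2 * Complex.exp (-(q p.1 : ℂ) - q p.2)
      * (H p ^ n / n.factorial)
      = ∑ s : Fin n → ι, (n.factorial : ℂ)⁻¹ * (starRingEnd ℂ (h n s p.1) * h n s p.2) := by
    intro n p
    simp only [hH, hh, Fintype.sum_pow, Finset.sum_div, Finset.mul_sum]
    refine Finset.sum_congr rfl fun s _ => ?_
    rw [sub_eq_add_neg, Complex.exp_add]
    simp only [map_mul, map_prod, ← Complex.exp_conj, map_neg, Complex.conj_ofReal,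
      Finset.prod_mul_distrib]
    ring
  have hpint : ∀ n s, Integrable (fun p : E × E => (n.factorial : ℂ)⁻¹ *
      (starRingEnd ℂ (h n s p.1) * h n s p.2)) (μ.prod μ) := by
    intro n s
    refine Integrable.const_mul ?_ _
    refine Integrable.mul_prod (f := fun x => starRingEnd ℂ (h n s x)) ?_ (hhint n s)
    exact (LinearIsometryEquiv.integrable_comp_iff Complex.conjLIE).2 (hhint n s)
  set F : ℕ → E × E → ℂ := fun N p => starRingEnd ℂ (f p.1) * f p.2 *
    Complex.exp (-(q p.1 : ℂ) - q p.2) * ∑ n ∈ Finset.range N, H p ^ n / n.factorial with hF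
  have hF' : ∀ N, F N = fun p => ∑ n ∈ Finset.range N, ∑ s : Fin n → ι,
      (n.factorial : ℂ)⁻¹ * (starRingEnd ℂ (h n s p.1) * h n s p.2) := by
    intro N; funext p
    simp only [hF, Finset.mul_sum, ← hterm]
  have hFint : ∀ N, Integrable (F N) (μ.prod μ) := by
    intro N
    rw [hF']
    exact integrable_finsetSum _ fun n _ => integrable_finsetSum _ fun s _ => hpint n s
  have hFval : ∀ N, ∫ p, F N p ∂(μ.prod μ) = ((∑ n ∈ Finset.range N, ∑ s : Fin n → ι,
      (n.factorial : ℝ)⁻¹ * ‖∫ x, h n s x ∂μ‖ ^ 2 : ℝ) : ℂ) := by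
    intro N
    rw [hF', integral_finsetSum _ fun n _ => integrable_finsetSum _ fun s _ => hpint n s]
    push_cast
    refine Finset.sum_congr rfl fun n _ => ?_
    rw [integral_finsetSum _ fun s _ => hpint n s]
    refine Finset.sum_congr rfl fun s _ => ?_
    rw [integral_const_mul, integral_prod_mul (fun x => starRingEnd ℂ (h n s x)), integral_conj,
      Complex.conj_mul']
  have hlim : Filter.Tendsto (fun N => ∫ p, F N p ∂(μ.prod μ)) Filter.atTop
      (nhds (∫ p : E × E, starRingEnd ℂ (f p.1) * f p.2 *
      Complex.exp (-(q p.1 : ℂ) - q p.2 + H p) ∂(μ.prod μ))) := by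
    refine tendsto_integral_of_dominated_convergence (fun p => ‖f p.1‖ * ‖f p.2‖)
      (fun N => (hFint N).1) (hf.norm.mul_prod hf.norm) ?_ ?_
    · intro N
      refine Filter.Eventually.of_forall fun p => ?_
      simp only [hF, norm_mul, RCLike.norm_conj]
      rw [mul_assoc]
      refine mul_le_of_le_one_right (by positivity) ?_
      have h1 : ‖Complex.exp (-(q p.1 : ℂ) - q p.2)‖ = Real.exp (-(q p.1 + q p.2)) := by
        rw [Complex.norm_exp]; simp; ring
      have h2 : ‖∑ n ∈ Finset.range N, H p ^ n / n.factorial‖ ≤ Real.exp (q p.1 + q p.2) := by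
        refine (norm_sum_le _ _).trans ?_
        simp only [norm_div, norm_pow, Complex.norm_natCast]
        exact (Real.sum_le_exp_of_nonneg (norm_nonneg _) N).trans (Real.exp_le_exp.2 (hHle p))
      rw [h1]
      calc _ ≤ Real.exp (-(q p.1 + q p.2)) * Real.exp (q p.1 + q p.2) := by gcongr
        _ = 1 := by rw [← Real.exp_add]; simp
    · refine Filter.Eventually.of_forall fun p => ?_
      rw [Complex.exp_add, ← mul_assoc]
      refine Filter.Tendsto.const_mul _ ?_
      rw [Complex.exp_eq_exp_ℂ]
      exact (NormedSpace.expSeries_div_hasSum_exp (H p)).tendsto_sum_nat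
  have hre := (Complex.continuous_re.tendsto _).comp hlim
  have him := (Complex.continuous_im.tendsto _).comp hlim
  simp only [Function.comp_def, hFval, Complex.ofReal_re, Complex.ofReal_im] at hre him
  refine ⟨_, ge_of_tendsto' hre fun N => by positivity, ?_⟩
  apply Complex.ext
  · rfl
  · rw [Complex.ofReal_im]
    exact tendsto_nhds_unique him tendsto_const_nhds

/-! ### Changes of variables and the Gaussian integral -/

theorem integral_comp_mulVec_s5 {d : ℕ} {M : Matrix (Fin d) (Fin d) ℝ} (hM : M.det ≠ 0)
    (g : (Fin d → ℝ) → ℂ) :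
    ∫ k, g (M.mulVec k) = ((|M.det|⁻¹ : ℝ) : ℂ) * ∫ v, g v := by
  have h1 := Real.map_matrix_volume_pi_eq_smul_volume_pi hM
  have hdet : LinearMap.det (Matrix.toLin' M) ≠ 0 := by rwa [LinearMap.det_toLin']
  have hemb : MeasurableEmbedding (Matrix.toLin' M) :=
    ((Matrix.toLin' M).equivOfDetNeZero hdet).toContinuousLinearEquiv.toHomeomorph.measurableEmbedding
  have h2 := hemb.integral_map (μ := volume) g
  rw [h1, integral_smul_measure] at h2
  simp only [Matrix.toLin'_apply] at h2
  rw [← h2, ENNReal.toReal_ofReal (abs_nonneg _), abs_inv, Complex.real_smul]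

/-- The Fourier transform of the Gaussian with quadratic form `c (A Aᵀ)⁻¹`, reduced to the isotropic
case by the substitution `z = A u`. -/
theorem gaussian_integral {d : ℕ} {A : Matrix (Fin d) (Fin d) ℝ} (hA : A.det ≠ 0) {c : ℝ}
    (hc : 0 < c) (ξ : Fin d → ℝ) :
    ∫ z : Fin d → ℝ, Complex.exp (Complex.I * dotR z ξ) *
        (Real.exp (-c * dotR z ((A * Aᵀ)⁻¹.mulVec z)) : ℂ) =
      ((|A.det| * (π / c) ^ (d / 2 : ℝ) : ℝ) : ℂ) *
        Complex.exp (-(dotR (Aᵀ.mulVec ξ) (Aᵀ.mulVec ξ) / (4 * c) : ℝ)) := by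
  have hAu : IsUnit A.det := hA.isUnit
  have hATu : IsUnit Aᵀ.det := by rwa [Matrix.det_transpose]
  have key := integral_comp_mulVec_s5 hA (fun z : Fin d → ℝ => Complex.exp (Complex.I * dotR z ξ) *
        (Real.exp (-c * dotR z ((A * Aᵀ)⁻¹.mulVec z)) : ℂ))
  have h0 : ((|A.det| : ℝ) : ℂ) ≠ 0 := by exact_mod_cast abs_ne_zero.2 hA
  have hg := GaussianFourier.integral_cexp_neg_mul_sum_add (b := (c : ℂ)) (by simpa using hc)
    (fun i : Fin d => Complex.I * ((Aᵀ.mulVec ξ) i : ℂ))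
  have hpt : ∀ u : Fin d → ℝ, Complex.exp (Complex.I * dotR (A.mulVec u) ξ) *
        (Real.exp (-c * dotR (A.mulVec u) ((A * Aᵀ)⁻¹.mulVec (A.mulVec u))) : ℂ) =
      Complex.exp (-(c : ℂ) * ∑ i, (u i : ℂ) ^ 2 +
        ∑ i, Complex.I * ((Aᵀ.mulVec ξ) i : ℂ) * (u i : ℂ)) := by
    intro u
    have e1 : dotR (A.mulVec u) ξ = ∑ i, (Aᵀ.mulVec ξ) i * u i := by
      change A.mulVec u ⬝ᵥ ξ = Aᵀ.mulVec ξ ⬝ᵥ u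
      rw [dotProduct_comm, Matrix.dotProduct_mulVec, Matrix.mulVec_transpose]
    have e2 : dotR (A.mulVec u) ((A * Aᵀ)⁻¹.mulVec (A.mulVec u)) = ∑ i, u i ^ 2 := by
      change A.mulVec u ⬝ᵥ (A * Aᵀ)⁻¹.mulVec (A.mulVec u) = _
      rw [Matrix.mulVec_mulVec, Matrix.mul_inv_rev, Matrix.mul_assoc, Matrix.nonsing_inv_mul _ hAu,
        Matrix.mul_one, dotProduct_comm, Matrix.dotProduct_mulVec, ← Matrix.mulVec_transpose,
        Matrix.mulVec_mulVec, Matrix.mul_nonsing_inv _ hATu, Matrix.one_mulVec]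
      simp [dotProduct, sq]
    rw [e1, e2, Complex.ofReal_exp, ← Complex.exp_add]
    congr 1
    push_cast
    rw [Finset.mul_sum, add_comm]
    simp only [mul_assoc]
  simp only [hpt, hg] at key
  rw [Complex.ofReal_inv, eq_inv_mul_iff_mul_eq₀ h0] at key
  rw [← key, Complex.ofReal_mul, mul_assoc]
  congr 2
  · rw [Complex.ofReal_cpow (by positivity)]
    simp
  · congr 1
    simp only [mul_pow, Complex.I_sq, dotR]
    push_cast
    rw [← Finset.mul_sum]
    simp only [sq]
    ring

/-- The exponent of the kernel, for `s = Sx` and `s' = Sw` (the skewness of `S` enters through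
`h1`, `h2`, `h3`), is that of a normalized coherent-state kernel with feature vector
`V (Sx) x = (√(2τ/c) (Sx + iax), √(2(1-τ)/c) Sx, √(2(1-τ)/c) ax)`. -/
theorem exponent_identity {d : ℕ} (s s' x w : Fin d → ℝ) {a τ c : ℝ} (hc : c = 2 * a * τ)
    (hc0 : 0 < c) (hτ0 : 0 ≤ τ) (hτ1 : τ ≤ 1) (h1 : dotR s x = 0) (h2 : dotR s' w = 0)
    (h3 : dotR x s' = -dotR s w)
    (V : (Fin d → ℝ) → (Fin d → ℝ) → (Fin d ⊕ Fin d ⊕ Fin d) → ℂ)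
    (hV : ∀ s x, V s x = Sum.elim
      (fun i => (√(2 * τ / c) : ℂ) * ((s i : ℂ) + Complex.I * (a * x i : ℝ)))
      (Sum.elim (fun i => ((√(2 * (1 - τ) / c) * s i : ℝ) : ℂ))
        (fun i => ((√(2 * (1 - τ) / c) * (a * x i) : ℝ) : ℂ)))) :
    Complex.I * (2 * dotR s w : ℝ) +
      (-(dotR ((2 : ℝ) • ((s' - s) - a • (w - x))) ((2 : ℝ) • ((s' - s) - a • (w - x)))
        / (4 * c) : ℝ) : ℂ) =
    -((∑ j, ‖V s x j‖ ^ 2) / 2 : ℝ) - ((∑ j, ‖V s' w j‖ ^ 2) / 2 : ℝ)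
        + ∑ j, starRingEnd ℂ (V s x j) * V s' w j := by
  have hα : 0 ≤ 2 * τ / c := by positivity
  have hβ : 0 ≤ 2 * (1 - τ) / c := div_nonneg (by linarith) hc0.le
  have hα2 := Real.sq_sqrt hα
  have hβ2 := Real.sq_sqrt hβ
  have hαc : ((√(2 * τ / c) : ℝ) : ℂ) ^ 2 = 2 * τ / c := by exact_mod_cast hα2
  have hβc : ((√(2 * (1 - τ) / c) : ℝ) : ℂ) ^ 2 = 2 * (1 - τ) / c := by exact_mod_cast hβ2
  have hc0' : (c : ℂ) ≠ 0 := by exact_mod_cast hc0.ne'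
  have hQ : ∀ s x : Fin d → ℝ, ∑ j, ‖V s x j‖ ^ 2 = 2 / c * (dotR s s + a ^ 2 * dotR x x) := by
    intro s x
    simp only [hV, Fintype.sum_sum_type, Sum.elim_inl, Sum.elim_inr, dotR, Finset.mul_sum,
      ← Finset.sum_add_distrib]
    refine Finset.sum_congr rfl fun i _ => ?_
    rw [norm_mul, mul_pow, Complex.norm_real, Complex.norm_real, Complex.norm_real,
      Complex.sq_norm, mul_comm Complex.I, Complex.normSq_add_mul_I]
    simp only [Real.norm_eq_abs, sq_abs, mul_pow, hα2, hβ2]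
    field_simp
    ring
  have hX : ∑ j, starRingEnd ℂ (V s x j) * V s' w j =
      2 / c * (dotR s s' + a ^ 2 * dotR x w) +
        Complex.I * (2 * τ / c * a * (dotR s w - dotR x s')) := by
    simp only [hV, Fintype.sum_sum_type, Sum.elim_inl, Sum.elim_inr, dotR]
    push_cast
    simp only [Finset.mul_sum, ← Finset.sum_add_distrib, ← Finset.sum_sub_distrib]
    refine Finset.sum_congr rfl fun i _ => ?_
    simp only [map_mul, map_add, Complex.conj_ofReal, Complex.conj_I]
    have e1 : (√(2 * τ / c) : ℂ) * ((s i : ℂ) + -Complex.I * (a * x i)) *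
        ((√(2 * τ / c) : ℂ) * ((s' i : ℂ) + Complex.I * (a * w i))) =
        (√(2 * τ / c) : ℂ) ^ 2 * (s i * s' i + a ^ 2 * (x i * w i) +
          Complex.I * (a * (s i * w i - x i * s' i))) := by
      linear_combination (-(√(2 * τ / c) : ℂ) ^ 2 * a ^ 2 * x i * w i) * Complex.I_sq
    have e2 : ∀ r y z : ℂ, r * y * (r * z) = r ^ 2 * (y * z) := fun r y z => by ring
    rw [e1, e2, e2, hαc, hβc]
    field_simp
    ring
  have hL : dotR ((2 : ℝ) • ((s' - s) - a • (w - x))) ((2 : ℝ) • ((s' - s) - a • (w - x))) =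
      4 * (dotR s' s' + dotR s s - 2 * dotR s s' + a ^ 2 * (dotR w w + dotR x x - 2 * dotR x w)
        - 2 * a * (dotR s' w - dotR x s' - dotR s w + dotR s x)) := by
    simp only [dotR, Finset.mul_sum, ← Finset.sum_add_distrib, ← Finset.sum_sub_distrib]
    refine Finset.sum_congr rfl fun i _ => ?_
    simp only [Pi.smul_apply, Pi.sub_apply, smul_eq_mul]
    ring
  have hτa : (2 : ℂ) * τ / c * a = 1 := by
    have h : (c : ℂ) = 2 * a * τ := by exact_mod_cast hc
    rw [div_mul_eq_mul_div, div_eq_one_iff_eq hc0', h]; ring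
  rw [hL, hX, hQ, hQ, h1, h2, h3, hτa]
  push_cast
  field_simp
  ring

/-! ### The Moyal square as a double integral -/

theorem Integrable.mul_phase {E : Type*} [TopologicalSpace E] [SecondCountableTopology E]
    [MeasurableSpace E] [OpensMeasurableSpace E] {μ : Measure E} {h : E → ℂ} (hh : Integrable h μ)
    {φ : E → ℝ} (hφ : Continuous φ) :
    Integrable (fun x => h x * Complex.exp (Complex.I * φ x)) μ := by
  refine hh.norm.mono' (hh.1.mul ?_) (Filter.Eventually.of_forall fun x => ?_)
  · exact (by fun_prop : Continuous fun x => Complex.exp (Complex.I * φ x)).aestronglyMeasurable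
  · rw [norm_mul, mul_comm Complex.I, Complex.norm_exp_ofReal_mul_I, mul_one]

theorem integrable_conj_mul {d : ℕ} (f : SchwartzMap (Fin d → ℝ) ℂ) :
    Integrable (fun p : (Fin d → ℝ) × (Fin d → ℝ) => starRingEnd ℂ (f p.1) * f p.2)
      (volume.prod volume) :=
  Integrable.mul_prod (f := fun x => starRingEnd ℂ (f x))
    ((LinearIsometryEquiv.integrable_comp_iff Complex.conjLIE).2 f.integrable) f.integrable

theorem continuous_two_mul_dotR_mulVec {d : ℕ} {E : Type*} [TopologicalSpace E]
    (M : Matrix (Fin d) (Fin d) ℝ) {g h : E → Fin d → ℝ} (hg : Continuous g) (hh : Continuous h) :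
    Continuous fun p => 2 * dotR (M.mulVec (g p)) (h p) := by
  have hM : Continuous fun p => M.mulVec (g p) := Continuous.matrix_mulVec continuous_const hg
  unfold dotR
  fun_prop

/-- The Moyal square in the variables `x = z + ½Θk`, `w = z + y`; the constant includes the Jacobian
of `k ↦ ½Θk`. -/
theorem moyal_eq {d : ℕ} {Θ : Matrix (Fin d) (Fin d) ℝ} (hdet : Θ.det ≠ 0)
    (f : SchwartzMap (Fin d → ℝ) ℂ) (z : Fin d → ℝ) :
    moyal Θ (fun y => starRingEnd ℂ (f y)) f z =
    ((((2 * π) ^ d)⁻¹ * |((2 : ℝ)⁻¹ • Θ).det|⁻¹ : ℝ) : ℂ) *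
      ∫ p : (Fin d → ℝ) × (Fin d → ℝ), starRingEnd ℂ (f p.1) * f p.2 *
        Complex.exp (Complex.I * (2 * dotR (Θ⁻¹.mulVec (p.1 - z)) (p.2 - z) : ℝ)) := by
  have hu : IsUnit Θ.det := hdet.isUnit
  have hM : ((2 : ℝ)⁻¹ • Θ).det ≠ 0 := by
    rw [Matrix.det_smul]; positivity
  have key := integral_comp_mulVec_s5 hM (fun v => ∫ y : Fin d → ℝ,
    starRingEnd ℂ (f (z + v)) * f (z + y) *
      Complex.exp (Complex.I * (2 * dotR (Θ⁻¹.mulVec v) y : ℝ)))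
  have h1 : ∀ k y : Fin d → ℝ,
      2 * dotR (Θ⁻¹.mulVec ((2 : ℝ)⁻¹ • Θ.mulVec k)) y = dotR k y := by
    intro k y
    rw [Matrix.mulVec_smul, Matrix.mulVec_mulVec, Matrix.nonsing_inv_mul _ hu,
      Matrix.one_mulVec]
    simp only [dotR, Finset.mul_sum, Pi.smul_apply, smul_eq_mul]
    refine Finset.sum_congr rfl fun i _ => by ring
  simp only [Matrix.smul_mulVec, h1] at key
  have h2 : ∀ v : Fin d → ℝ, (∫ y : Fin d → ℝ, starRingEnd ℂ (f (z + v)) * f (z + y) *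
      Complex.exp (Complex.I * (2 * dotR (Θ⁻¹.mulVec v) y : ℝ))) =
      ∫ w : Fin d → ℝ, starRingEnd ℂ (f (z + v)) * f w *
      Complex.exp (Complex.I * (2 * dotR (Θ⁻¹.mulVec v) (w - z) : ℝ)) := by
    intro v
    rw [← integral_sub_right_eq_self _ z]
    simp
  unfold moyal
  rw [key, Complex.real_smul, ← mul_assoc, ← Complex.ofReal_mul]
  congr 1
  simp only [h2]
  rw [← integral_sub_right_eq_self _ z, Measure.volume_eq_prod, integral_prod]
  · simp
  · refine Integrable.mul_phase (integrable_conj_mul f) ?_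
    exact continuous_two_mul_dotR_mulVec _ (by fun_prop) (by fun_prop)

/-- Positivity of the Gaussian-weighted Moyal square:
`∫ (f̄ ⋆ f)(z) exp(−Ω̃ tanh(2Ω̃t) ⟨z,Gz⟩) dz` is a nonnegative real number,
where `G = (1 − ¼Ω̃²Θ²)⁻¹`. -/
theorem moyal_gaussian_weighted_positivity {d : ℕ} (hd : Even d) (hd2 : 2 ≤ d)
    (Θ : Matrix (Fin d) (Fin d) ℝ) (hskew : Θᵀ = -Θ) (hdet : Θ.det ≠ 0)
    (Ω t : ℝ) (hΩ : 0 < Ω) (ht : 0 < t)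
    (f : SchwartzMap ((Fin d) → ℝ) ℂ) :
    ∃ r : ℝ, 0 ≤ r ∧
      (∫ z : Fin d → ℝ,
        moyal Θ (fun y => starRingEnd ℂ (f y)) ⇑f z *
          (Real.exp (-(Ω * Real.tanh (2 * Ω * t)) *
            dotR z ((((1 : Matrix (Fin d) (Fin d) ℝ) - (Ω ^ 2 / 4) • (Θ * Θ))⁻¹).mulVec z))
            : ℂ)) = (r : ℂ) := by
  set τ := Real.tanh (2 * Ω * t) with hτ
  have hτ0 : 0 < τ := by
    rw [hτ, Real.tanh_eq_sinh_div_cosh]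
    exact div_pos (Real.sinh_pos_iff.2 (by positivity)) (Real.cosh_pos _)
  have hτ1 : τ ≤ 1 := (Real.tanh_lt_one _).le
  set a := Ω / 2 with ha
  set c := Ω * τ with hc
  have hc0 : 0 < c := by positivity
  have hcτ : c = 2 * a * τ := by rw [ha, hc]; ring
  have hu : IsUnit Θ.det := hdet.isUnit
  have hskewdot : ∀ (M : Matrix (Fin d) (Fin d) ℝ), Mᵀ = -M → ∀ x y : Fin d → ℝ,
      dotR x (M.mulVec y) = -dotR (M.mulVec x) y := by
    intro M hM x y
    change x ⬝ᵥ M.mulVec y = -(M.mulVec x ⬝ᵥ y)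
    rw [Matrix.dotProduct_mulVec, ← Matrix.mulVec_transpose, hM, Matrix.neg_mulVec,
      neg_dotProduct]
  have hcomm : ∀ x y : Fin d → ℝ, dotR x y = dotR y x := fun x y => dotProduct_comm x y
  have hself : ∀ (M : Matrix (Fin d) (Fin d) ℝ), Mᵀ = -M → ∀ x : Fin d → ℝ,
      dotR (M.mulVec x) x = 0 := by
    intro M hM x
    have := hskewdot M hM x x
    rw [hcomm] at this
    linarith
  set A : Matrix (Fin d) (Fin d) ℝ := 1 + a • Θ with hA
  have hAT : Aᵀ = 1 - a • Θ := by
    rw [hA, Matrix.transpose_add, Matrix.transpose_smul, hskew, Matrix.transpose_one, smul_neg,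
      sub_eq_add_neg]
  have hG : (1 : Matrix (Fin d) (Fin d) ℝ) - (Ω ^ 2 / 4) • (Θ * Θ) = A * Aᵀ := by
    rw [hAT, hA]
    rw [show Ω ^ 2 / 4 = a * a by rw [ha]; ring]
    simp only [add_mul, mul_sub, one_mul, mul_one, smul_mul_assoc, mul_smul_comm, smul_add,
      smul_smul]
    abel
  have hAdet : A.det ≠ 0 := by
    -- `⟨A v, v⟩ = |v|²`, as `Θ` is skew.
    intro h0
    obtain ⟨v, hv, hv0⟩ := Matrix.exists_mulVec_eq_zero_iff.2 h0
    apply hv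
    have h1 : A.mulVec v ⬝ᵥ v = 0 := by rw [hv0, zero_dotProduct]
    have h2 : Θ.mulVec v ⬝ᵥ v = 0 := hself Θ hskew v
    rw [hA, Matrix.add_mulVec, Matrix.one_mulVec, Matrix.smul_mulVec, add_dotProduct,
      smul_dotProduct, h2, smul_zero, add_zero] at h1
    exact dotProduct_self_eq_zero.1 h1
  set S := Θ⁻¹ with hS
  have hST : Sᵀ = -S := by
    rw [hS, Matrix.transpose_nonsing_inv, hskew]
    refine Matrix.inv_eq_right_inv ?_
    rw [neg_mul_neg, Matrix.mul_nonsing_inv _ hu]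
  rw [hG]
  set W : (Fin d → ℝ) → ℂ := fun z => (Real.exp (-c * dotR z ((A * Aᵀ)⁻¹.mulVec z)) : ℂ) with hW
  set K : ℝ := |A.det| * (π / c) ^ (d / 2 : ℝ) with hK
  have hK0 : 0 < K := by positivity
  have hgauss : ∀ ξ : Fin d → ℝ, ∫ z : Fin d → ℝ, Complex.exp (Complex.I * dotR z ξ) * W z =
      (K : ℂ) * Complex.exp (-(dotR (Aᵀ.mulVec ξ) (Aᵀ.mulVec ξ) / (4 * c) : ℝ)) :=
    gaussian_integral hAdet hc0
  have hWint : Integrable W := by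
    -- A non-integrable `W` would have integral `0`, but the Gaussian integral at `ξ = 0` is nonzero.
    by_contra hni
    have h1 := hgauss 0
    have h2 : (fun z : Fin d → ℝ => Complex.exp (Complex.I * dotR z 0) * W z) = W := by
      funext z; simp [dotR]
    rw [h2, integral_undef hni] at h1
    exact mul_ne_zero (by exact_mod_cast hK0.ne') (Complex.exp_ne_zero _) h1.symm
  set B : ℝ := ((2 * π) ^ d)⁻¹ * |((2 : ℝ)⁻¹ • Θ).det|⁻¹ with hB
  have hB0 : 0 ≤ B := by positivity
  have hphase : ∀ x w z : Fin d → ℝ, 2 * dotR (S.mulVec (x - z)) (w - z) =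
      2 * dotR (S.mulVec x) w + dotR z ((2 : ℝ) • S.mulVec (w - x)) := by
    intro x w z
    have h1 : S.mulVec z ⬝ᵥ z = 0 := hself S hST z
    have h2 : S.mulVec z ⬝ᵥ w = - (z ⬝ᵥ S.mulVec w) := by
      linarith [show z ⬝ᵥ S.mulVec w = -(S.mulVec z ⬝ᵥ w) from hskewdot S hST z w]
    change 2 * (S.mulVec (x - z) ⬝ᵥ (w - z)) =
      2 * (S.mulVec x ⬝ᵥ w) + z ⬝ᵥ (2 : ℝ) • S.mulVec (w - x)
    rw [Matrix.mulVec_sub, Matrix.mulVec_sub, dotProduct_smul, smul_eq_mul, dotProduct_sub,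
      sub_dotProduct, sub_dotProduct, dotProduct_sub, h1, h2, dotProduct_comm (S.mulVec x) z]
    ring
  set V : (Fin d → ℝ) → (Fin d → ℝ) → (Fin d ⊕ Fin d ⊕ Fin d) → ℂ := fun s x => Sum.elim
      (fun i => (√(2 * τ / c) : ℂ) * ((s i : ℂ) + Complex.I * (a * x i : ℝ)))
      (Sum.elim (fun i => ((√(2 * (1 - τ) / c) * s i : ℝ) : ℂ))
        (fun i => ((√(2 * (1 - τ) / c) * (a * x i) : ℝ) : ℂ))) with hV
  have hUm : ∀ j, Measurable fun x => V (S.mulVec x) x j := by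
    rintro (j | j | j)
    all_goals
      refine Continuous.measurable ?_
      simp only [hV, Sum.elim_inl, Sum.elim_inr]
      fun_prop
  obtain ⟨r, hr0, hr⟩ := exp_kernel_nonneg (fun x => V (S.mulVec x) x) hUm
    (f.integrable (μ := volume))
  refine ⟨B * K * r, by positivity, ?_⟩
  have hjoint : Integrable (fun q : (Fin d → ℝ) × ((Fin d → ℝ) × (Fin d → ℝ)) =>
      (W q.1 * (starRingEnd ℂ (f q.2.1) * f q.2.2)) *
        Complex.exp (Complex.I * (2 * dotR (S.mulVec (q.2.1 - q.1)) (q.2.2 - q.1) : ℝ)))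
      (volume.prod (volume.prod volume)) := by
    refine Integrable.mul_phase (hWint.mul_prod (integrable_conj_mul f)) ?_
    exact continuous_two_mul_dotR_mulVec _ (by fun_prop) (by fun_prop)
  calc ∫ z, moyal Θ (fun y => starRingEnd ℂ (f y)) f z * W z
      = ∫ z, (B : ℂ) * ∫ p : (Fin d → ℝ) × (Fin d → ℝ), (W z * (starRingEnd ℂ (f p.1) * f p.2)) *
        Complex.exp (Complex.I * (2 * dotR (S.mulVec (p.1 - z)) (p.2 - z) : ℝ)) := by
        congr 1; funext z
        rw [moyal_eq hdet, mul_assoc, ← integral_mul_const]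
        congr 2; funext p; ring
    _ = B * ∫ p : (Fin d → ℝ) × (Fin d → ℝ), ∫ z, (W z * (starRingEnd ℂ (f p.1) * f p.2)) *
        Complex.exp (Complex.I * (2 * dotR (S.mulVec (p.1 - z)) (p.2 - z) : ℝ)) := by
        rw [integral_const_mul, integral_integral_swap hjoint]
    _ = B * ∫ p : (Fin d → ℝ) × (Fin d → ℝ), (K : ℂ) * (starRingEnd ℂ (f p.1) * f p.2 *
          Complex.exp (-((∑ j, ‖V (S.mulVec p.1) p.1 j‖ ^ 2) / 2 : ℝ)
            - ((∑ j, ‖V (S.mulVec p.2) p.2 j‖ ^ 2) / 2 : ℝ)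
            + ∑ j, starRingEnd ℂ (V (S.mulVec p.1) p.1 j) * V (S.mulVec p.2) p.2 j)) := by
        congr 2; funext p
        obtain ⟨x, w⟩ := p
        dsimp only
        have hAξ : Aᵀ.mulVec ((2 : ℝ) • S.mulVec (w - x)) =
            (2 : ℝ) • ((S.mulVec w - S.mulVec x) - a • (w - x)) := by
          rw [hAT, Matrix.mulVec_smul, Matrix.sub_mulVec, Matrix.one_mulVec, Matrix.smul_mulVec,
            Matrix.mulVec_mulVec, hS, Matrix.mul_nonsing_inv _ hu, Matrix.one_mulVec,
            Matrix.mulVec_sub]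
        have hid := exponent_identity (S.mulVec x) (S.mulVec w) x w hcτ hc0 hτ0.le hτ1
          (hself S hST x) (hself S hST w) (hskewdot S hST x w) V (fun _ _ => rfl)
        rw [← hid, Complex.exp_add, ← hAξ]
        have h1 : ∀ z, (W z * (starRingEnd ℂ (f x) * f w)) *
            Complex.exp (Complex.I * (2 * dotR (S.mulVec (x - z)) (w - z) : ℝ)) =
            (starRingEnd ℂ (f x) * f w * Complex.exp (Complex.I * (2 * dotR (S.mulVec x) w : ℝ))) *
            (Complex.exp (Complex.I * dotR z ((2 : ℝ) • S.mulVec (w - x))) * W z) := by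
          intro z
          rw [hphase, Complex.ofReal_add, mul_add, Complex.exp_add]
          ring
        simp only [h1]
        rw [integral_const_mul, hgauss, ← Complex.ofReal_neg]
        ring
    _ = ((B * K * r : ℝ) : ℂ) := by
        rw [integral_const_mul]
        rw [Measure.volume_eq_prod, hr]
        push_cast; ring

end
end

section
/- Let V be a complex inner product space and b_1, …, b_d : V → V bounded linear operators satisfying the canonical anticommutation relations {b_μ, b_ν} = 0, {b_μ*, b_ν*} = 0 and {b_μ, b_ν*} = δ_{μν} id_V. Define Γ^μ := i(b_μ − b_μ*) − ½ Ω̃ Σ_ν Θ_{μν}(b_ν + b_ν*) and Γ^{μ+d} := (b_μ + b_μ*) − ½ Ω̃ Σ_ν Θ_{μν} i(b_ν − b_ν*) for μ = 1, …, d. Then {Γ^μ, Γ^ν} = 2 (G^{-1})_{μν} id_V, {Γ^{μ+d}, Γ^{ν+d}} = 2 (G^{-1})_{μν} id_V, and {Γ^μ, Γ^{ν+d}} = 0 for all μ, ν ∈ {1,…,d}, where G^{-1} = Id_d − ¼Ω̃²Θ². In particular Γ^1, …, Γ^{2d} generate a Clifford algebra of dimension 2d. -/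
/-!
The quadratures `P_μ = i(b_μ − b_μ*)` and `Q_μ = b_μ + b_μ*` satisfy
`{P_μ, P_ν} = {Q_μ, Q_ν} = 2δ_{μν}` and `{P_μ, Q_ν} = 0` by the canonical anticommutation
relations. With `c = (Ω/2) Θ`, the operators in question are `P − c Q` and `Q − c P`, so
bilinearity of the anticommutator gives `{P − c Q, P − c Q} = {Q − c P, Q − c P} = 2(1 + c cᵀ)`
and `{P − c Q, Q − c P} = −2(c + cᵀ)`. Skew-symmetry of `Θ` turns the former into
`2(1 − (Ω²/4) Θ²)` and the latter into `0`.

The bilinear expansion is done in an arbitrary `ℂ`-algebra (`anticomm_twist_self`,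
`anticomm_twist_swap`).
-/

open MeasureTheory Real Matrix
open scoped InnerProductSpace ComplexOrder

noncomputable section

/-- The operators `Γ^μ := i(b_μ − b_μ*) − ½Ω̃ Σ_ν Θ_{μν}(b_ν + b_ν*)`. -/
def GammaA {d : ℕ} (Θ : Matrix (Fin d) (Fin d) ℝ) (Ω : ℝ) {V : Type*}
    [NormedAddCommGroup V] [InnerProductSpace ℂ V]
    (b bs : Fin d → V →L[ℂ] V) (μ : Fin d) : V →L[ℂ] V :=
  Complex.I • (b μ - bs μ) - ∑ ν, ((Ω / 2 * Θ μ ν : ℝ) : ℂ) • (b ν + bs ν)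

/-- The operators `Γ^{μ+d} := (b_μ + b_μ*) − ½Ω̃ Σ_ν Θ_{μν} i(b_ν − b_ν*)`. -/
def GammaB {d : ℕ} (Θ : Matrix (Fin d) (Fin d) ℝ) (Ω : ℝ) {V : Type*}
    [NormedAddCommGroup V] [InnerProductSpace ℂ V]
    (b bs : Fin d → V →L[ℂ] V) (μ : Fin d) : V →L[ℂ] V :=
  (b μ + bs μ) - ∑ ν, ((Ω / 2 * Θ μ ν : ℝ) : ℂ) • (Complex.I • (b ν - bs ν))

/-- The anticommutator `{x, y} = x y + y x` as a bilinear map, so that sums and scalars can be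
pulled out of either argument. -/
def anticomm (R : Type*) [Ring R] [Algebra ℂ R] : R →ₗ[ℂ] R →ₗ[ℂ] R :=
  LinearMap.mul ℂ R + (LinearMap.mul ℂ R).flip

lemma anticomm_apply {R : Type*} [Ring R] [Algebra ℂ R] (x y : R) :
    anticomm R x y = x * y + y * x := by
  simp [anticomm]

lemma anticomm_comm {R : Type*} [Ring R] [Algebra ℂ R] (x y : R) :
    anticomm R x y = anticomm R y x := by
  simp [anticomm_apply, add_comm]

/-- If `E` and `F` are mutually anticommuting Clifford families, then `X = E − c F` satisfies
`{X_μ, X_ν} = 2(1 + c cᵀ)_{μν}`. -/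
lemma anticomm_twist_self {d : ℕ} {R : Type*} [Ring R] [Algebra ℂ R] (E F : Fin d → R)
    (c : Fin d → Fin d → ℂ)
    (hE : ∀ μ ν, anticomm R (E μ) (E ν) = (if μ = ν then (2 : ℂ) else 0) • (1 : R))
    (hF : ∀ μ ν, anticomm R (F μ) (F ν) = (if μ = ν then (2 : ℂ) else 0) • (1 : R))
    (hEF : ∀ μ ν, anticomm R (E μ) (F ν) = 0) (μ ν : Fin d) :
    anticomm R (E μ - ∑ ρ, c μ ρ • F ρ) (E ν - ∑ ρ, c ν ρ • F ρ)
      = ((if μ = ν then (2 : ℂ) else 0) + 2 * ∑ ρ, c μ ρ * c ν ρ) • (1 : R) := by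
  have hFE : ∀ μ ν, anticomm R (F μ) (E ν) = 0 := fun μ ν => by rw [anticomm_comm, hEF]
  simp only [map_sub, map_sum, map_smul, LinearMap.sub_apply, LinearMap.sum_apply,
    LinearMap.smul_apply, hE, hF, hEF, hFE, smul_zero, Finset.sum_const_zero, sub_zero, zero_sub,
    smul_smul, ← Finset.sum_smul]
  simp [Finset.mul_sum, add_smul, Finset.sum_smul, smul_smul, mul_comm, mul_assoc, mul_left_comm]

/-- If `E` and `F` are mutually anticommuting Clifford families, then
`{(E − c F)_μ, (F − c E)_ν} = −2(c + cᵀ)_{μν}`. -/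
lemma anticomm_twist_swap {d : ℕ} {R : Type*} [Ring R] [Algebra ℂ R] (E F : Fin d → R)
    (c : Fin d → Fin d → ℂ)
    (hE : ∀ μ ν, anticomm R (E μ) (E ν) = (if μ = ν then (2 : ℂ) else 0) • (1 : R))
    (hF : ∀ μ ν, anticomm R (F μ) (F ν) = (if μ = ν then (2 : ℂ) else 0) • (1 : R))
    (hEF : ∀ μ ν, anticomm R (E μ) (F ν) = 0) (μ ν : Fin d) :
    anticomm R (E μ - ∑ ρ, c μ ρ • F ρ) (F ν - ∑ ρ, c ν ρ • E ρ)
      = (-2 * (c μ ν + c ν μ)) • (1 : R) := by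
  have hFE : ∀ μ ν, anticomm R (F μ) (E ν) = 0 := fun μ ν => by rw [anticomm_comm, hEF]
  simp only [map_sub, map_sum, map_smul, LinearMap.sub_apply, LinearMap.sum_apply,
    LinearMap.smul_apply, hE, hF, hEF, hFE, smul_zero, Finset.sum_const_zero, sub_zero, zero_sub,
    smul_smul, ← Finset.sum_smul, ← neg_smul, ← sub_smul]
  congr 1
  simp
  ring

/-- If `b_1,…,b_d` satisfy the canonical anticommutation relations
(`bs_μ` being the adjoint of `b_μ`), then the operators `Γ^μ`, `Γ^{μ+d}` satisfy
`{Γ^μ,Γ^ν} = {Γ^{μ+d},Γ^{ν+d}} = 2(G⁻¹)_{μν}·id` and `{Γ^μ,Γ^{ν+d}} = 0`,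
where `G⁻¹ = 1 − ¼Ω̃²Θ²`. -/
theorem gamma_clifford_relations {d : ℕ} (hd : Even d) (hd2 : 2 ≤ d)
    (Θ : Matrix (Fin d) (Fin d) ℝ) (hskew : Θᵀ = -Θ) (hdet : Θ.det ≠ 0)
    (Ω : ℝ) (hΩ : 0 < Ω)
    (V : Type*) [NormedAddCommGroup V] [InnerProductSpace ℂ V]
    (b bs : Fin d → V →L[ℂ] V)
    (hadj : ∀ (μ : Fin d) (x y : V), ⟪bs μ x, y⟫_ℂ = ⟪x, b μ y⟫_ℂ)
    (hbb : ∀ μ ν : Fin d, b μ ∘L b ν + b ν ∘L b μ = 0)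
    (hbsbs : ∀ μ ν : Fin d, bs μ ∘L bs ν + bs ν ∘L bs μ = 0)
    (hbbs : ∀ μ ν : Fin d, b μ ∘L bs ν + bs ν ∘L b μ
      = if μ = ν then (1 : V →L[ℂ] V) else 0) :
    ∀ μ ν : Fin d,
      GammaA Θ Ω b bs μ ∘L GammaA Θ Ω b bs ν + GammaA Θ Ω b bs ν ∘L GammaA Θ Ω b bs μ
        = ((2 * (((1 : Matrix (Fin d) (Fin d) ℝ) - (Ω ^ 2 / 4) • (Θ * Θ)) μ ν) : ℝ) : ℂ)
            • (1 : V →L[ℂ] V) ∧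
      GammaB Θ Ω b bs μ ∘L GammaB Θ Ω b bs ν + GammaB Θ Ω b bs ν ∘L GammaB Θ Ω b bs μ
        = ((2 * (((1 : Matrix (Fin d) (Fin d) ℝ) - (Ω ^ 2 / 4) • (Θ * Θ)) μ ν) : ℝ) : ℂ)
            • (1 : V →L[ℂ] V) ∧
      GammaA Θ Ω b bs μ ∘L GammaB Θ Ω b bs ν + GammaB Θ Ω b bs ν ∘L GammaA Θ Ω b bs μ
        = 0 := by
  set P : Fin d → V →L[ℂ] V := fun μ => Complex.I • (b μ - bs μ) with hP
  set Q : Fin d → V →L[ℂ] V := fun μ => b μ + bs μ with hQ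
  set c : Fin d → Fin d → ℂ := fun μ ν => ((Ω / 2 * Θ μ ν : ℝ) : ℂ) with hc
  have kbb : ∀ μ ν, anticomm (V →L[ℂ] V) (b μ) (b ν) = 0 := fun μ ν => by
    rw [anticomm_apply]; exact hbb μ ν
  have kss : ∀ μ ν, anticomm (V →L[ℂ] V) (bs μ) (bs ν) = 0 := fun μ ν => by
    rw [anticomm_apply]; exact hbsbs μ ν
  have kbs : ∀ μ ν, anticomm (V →L[ℂ] V) (b μ) (bs ν)
      = (if μ = ν then (1 : ℂ) else 0) • (1 : V →L[ℂ] V) := fun μ ν => by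
    rw [anticomm_apply]; refine (hbbs μ ν).trans ?_; split_ifs <;> simp
  have ksb : ∀ μ ν, anticomm (V →L[ℂ] V) (bs μ) (b ν)
      = (if μ = ν then (1 : ℂ) else 0) • (1 : V →L[ℂ] V) := fun μ ν => by
    rw [anticomm_comm, kbs]; simp only [eq_comm]
  have hPP : ∀ μ ν, anticomm _ (P μ) (P ν)
      = (if μ = ν then (2 : ℂ) else 0) • (1 : V →L[ℂ] V) := fun μ ν => by
    simp only [hP, map_sub, map_smul, LinearMap.sub_apply, LinearMap.smul_apply, kbb, kss, kbs,
      ksb]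
    split_ifs
    · simp [smul_smul, ← two_smul ℂ, smul_sub]
    · simp
  have hQQ : ∀ μ ν, anticomm _ (Q μ) (Q ν)
      = (if μ = ν then (2 : ℂ) else 0) • (1 : V →L[ℂ] V) := fun μ ν => by
    simp only [hQ, map_add, LinearMap.add_apply, kbb, kss, kbs, ksb]
    split_ifs
    · simp [← two_smul ℂ]
    · simp
  have hPQ : ∀ μ ν, anticomm _ (P μ) (Q ν) = 0 := fun μ ν => by
    simp only [hP, hQ, map_sub, map_add, map_smul, LinearMap.sub_apply, LinearMap.smul_apply, kbb,
      kss, kbs, ksb]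
    simp
  have hQP : ∀ μ ν, anticomm _ (Q μ) (P ν) = 0 := fun μ ν => by rw [anticomm_comm, hPQ]
  have hsk : ∀ μ ν, Θ ν μ = -Θ μ ν := fun μ ν => congrFun (congrFun hskew μ) ν
  -- `1 + c cᵀ = 1 - (Ω² / 4) Θ²`, by skew-symmetry of `Θ`.
  have hcoef : ∀ μ ν, ((if μ = ν then (2 : ℂ) else 0) + 2 * ∑ ρ, c μ ρ * c ν ρ)
      = ((2 * (((1 : Matrix (Fin d) (Fin d) ℝ) - (Ω ^ 2 / 4) • (Θ * Θ)) μ ν) : ℝ) : ℂ) := by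
    intro μ ν
    have hs : ∑ ρ, c μ ρ * c ν ρ = ((-(Ω ^ 2 / 4 * ∑ ρ, Θ μ ρ * Θ ρ ν) : ℝ) : ℂ) := by
      rw [Finset.mul_sum, ← Finset.sum_neg_distrib, Complex.ofReal_sum]
      refine Finset.sum_congr rfl fun ρ _ => ?_
      simp only [hc, hsk ν ρ]
      push_cast
      ring
    rw [hs, Matrix.sub_apply, Matrix.smul_apply, Matrix.mul_apply, Matrix.one_apply, smul_eq_mul]
    split_ifs <;> push_cast <;> ring
  intro μ ν
  refine ⟨?_, ?_, ?_⟩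
  · rw [← hcoef, ← anticomm_twist_self P Q c hPP hQQ hPQ, anticomm_apply]
    rfl
  · rw [← hcoef, ← anticomm_twist_self Q P c hQQ hPP hQP, anticomm_apply]
    rfl
  · have h := anticomm_twist_swap P Q c hPP hQQ hPQ μ ν
    have h0 : c μ ν + c ν μ = 0 := by
      simp only [hc, hsk μ ν]
      push_cast
      ring
    rw [h0, mul_zero, zero_smul, anticomm_apply] at h
    exact h

end
end

section
/- Let V be a finite-dimensional complex inner product space with operators b_1,…,b_d satisfying the canonical anticommutation relations {b_μ, b_ν} = 0 and {b_μ, b_ν*} = δ_{μν} id_V. On V-valued Schwartz functions 𝓢(ℝ^d, V), define a_μψ := ∂_μψ + Ω̃ x_μ ψ and a_μ†ψ := −∂_μψ + Ω̃ x_μ ψ, and set D₁ := Σ_μ (a_μ b_μ* + a_μ† b_μ) and D₂ := Σ_μ (i a_μ b_μ − i a_μ† b_μ*), where the b's act pointwise on the V-component. Then D₁² ψ = Hψ + Ω̃ Σψ and D₂² ψ = Hψ − Ω̃ Σψ for every ψ ∈ 𝓢(ℝ^d, V), where Hψ := −Δψ + Ω̃² ‖x‖² ψ and Σ := Σ_μ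 (b_μ* b_μ − b_μ b_μ*). -/
/-!
Both operators are Clifford-type first order operators `D = ∑ μ, (E μ ∂_μ + Ω x_μ F μ)`: for `D₁`
the coefficients are `E = b* - b` and `F = b* + b`, and for `D₂` they are `E = i (b* + b)` and
`F = i (b - b*)`. The canonical anticommutation relations (with `{b*_μ, b*_ν} = 0`, the adjoint of
`{b_μ, b_ν} = 0`) say in both cases that `{E μ, E ν} = -2 δ`, `{F μ, F ν} = 2 δ` and
`{E μ, F ν} = 0`.

Squaring `D` (`cliffordOp_sq`), the second order part symmetrises to `-Δ` because partial derivatives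
commute, the potential part symmetrises to `Ω² ‖x‖²`, and the first order terms cancel up to the
commutators `[∂_μ, x_ν] = δ`, which contribute `Ω ∑ μ, E μ F μ`. This last sum is `Σ` for `D₁`
and `-Σ` for `D₂`.
-/

open MeasureTheory Real Matrix
open scoped InnerProductSpace

noncomputable section

variable {V : Type*} [NormedAddCommGroup V] [InnerProductSpace ℂ V]

/-- Partial derivative in the `μ`-th coordinate direction of a `V`-valued function. -/
def pderV {d : ℕ} (μ : Fin d) (ψ : (Fin d → ℝ) → V) (x : Fin d → ℝ) : V :=
  fderiv ℝ ψ x (Pi.single μ 1)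

/-- The bosonic annihilation operator `a_μ ψ = ∂_μ ψ + Ω̃ x_μ ψ`. -/
def annOp {d : ℕ} (Ω : ℝ) (μ : Fin d) (ψ : (Fin d → ℝ) → V) (x : Fin d → ℝ) : V :=
  pderV μ ψ x + (Ω * x μ) • ψ x

/-- The bosonic creation operator `a_μ† ψ = −∂_μ ψ + Ω̃ x_μ ψ`. -/
def creOp {d : ℕ} (Ω : ℝ) (μ : Fin d) (ψ : (Fin d → ℝ) → V) (x : Fin d → ℝ) : V :=
  -pderV μ ψ x + (Ω * x μ) • ψ x

/-- The Dirac-type operator `D₁ = Σ_μ (a_μ b_μ* + a_μ† b_μ)`. -/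
def D1op {d : ℕ} (Ω : ℝ) (b bs : Fin d → V →L[ℂ] V)
    (ψ : (Fin d → ℝ) → V) (x : Fin d → ℝ) : V :=
  ∑ μ, (bs μ (annOp Ω μ ψ x) + b μ (creOp Ω μ ψ x))

/-- The Dirac-type operator `D₂ = Σ_μ (i a_μ b_μ − i a_μ† b_μ*)`. -/
def D2op {d : ℕ} (Ω : ℝ) (b bs : Fin d → V →L[ℂ] V)
    (ψ : (Fin d → ℝ) → V) (x : Fin d → ℝ) : V :=
  ∑ μ, (Complex.I • b μ (annOp Ω μ ψ x) - Complex.I • bs μ (creOp Ω μ ψ x))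

/-- The harmonic oscillator Hamiltonian `H ψ = −Δψ + Ω̃²‖x‖²ψ`. -/
def Hop {d : ℕ} (Ω : ℝ) (ψ : (Fin d → ℝ) → V) (x : Fin d → ℝ) : V :=
  -(∑ μ, pderV μ (pderV μ ψ) x) + (Ω ^ 2 * ∑ i, (x i) ^ 2) • ψ x

/-- The fermionic number-type operator `Σ = Σ_μ (b_μ* b_μ − b_μ b_μ*)`. -/
def SigmaOp {d : ℕ} (b bs : Fin d → V →L[ℂ] V) : V →L[ℂ] V :=
  ∑ μ, (bs μ ∘L b μ - b μ ∘L bs μ)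

/-- The first order operator `∑ μ, (E μ ∂_μ + Ω x_μ F μ)` with constant coefficients `E μ`, `F μ`
acting on the values. -/
def cliffordOp {d : ℕ} (Ω : ℝ) (E F : Fin d → V →L[ℂ] V)
    (ψ : (Fin d → ℝ) → V) (x : Fin d → ℝ) : V :=
  ∑ μ, (E μ (pderV μ ψ x) + (Ω * x μ) • F μ (ψ x))

/-- A double sum only sees the symmetric part of its summand; here that part is diagonal. -/
lemma sum_sum_of_symm_diag {d : ℕ} (T : Fin d → Fin d → V) (S : Fin d → V)
    (h : ∀ μ ν, T μ ν + T ν μ = if μ = ν then (2 : ℝ) • S μ else 0) :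
    ∑ μ, ∑ ν, T μ ν = ∑ μ, S μ := by
  have h2 : (2 : ℝ) • ∑ μ, ∑ ν, T μ ν = (2 : ℝ) • ∑ μ, S μ := by
    rw [two_smul]
    nth_rewrite 2 [Finset.sum_comm]
    simp only [← Finset.sum_add_distrib, h]
    simp [Finset.smul_sum]
  exact smul_right_injective V (two_ne_zero (α := ℝ)) h2

lemma differentiable_pderV {d : ℕ} {ψ : (Fin d → ℝ) → V} (hψ : ContDiff ℝ 2 ψ) (μ : Fin d) :
    Differentiable ℝ (pderV μ ψ) := by
  have h : Differentiable ℝ (fderiv ℝ ψ) :=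
    (hψ.fderiv_right (m := 1) (by norm_num)).differentiable (by norm_num)
  exact fun x => (h x).clm_apply (differentiableAt_const _)

lemma pderV_comm {d : ℕ} {ψ : (Fin d → ℝ) → V} (hψ : ContDiff ℝ 2 ψ) (μ ν : Fin d)
    (x : Fin d → ℝ) : pderV μ (pderV ν ψ) x = pderV ν (pderV μ ψ) x := by
  have h : Differentiable ℝ (fderiv ℝ ψ) :=
    (hψ.fderiv_right (m := 1) (by norm_num)).differentiable (by norm_num)
  have key : ∀ μ ν, pderV μ (pderV ν ψ) x
      = fderiv ℝ (fderiv ℝ ψ) x (Pi.single μ 1) (Pi.single ν 1) := by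
    intro μ ν
    have := ((h x).hasFDerivAt.clm_apply (hasFDerivAt_const (Pi.single ν (1 : ℝ)) x)).fderiv
    exact (DFunLike.congr_fun this _).trans (by simp)
  rw [key, key]
  exact (hψ.contDiffAt.isSymmSndFDerivAt (by simp)).eq _ _

/-- The Leibniz rule for `cliffordOp`; the `δ` term comes from `∂_μ x_ν = δ`. -/
lemma pderV_cliffordOp {d : ℕ} (Ω : ℝ) (E F : Fin d → V →L[ℂ] V) {ψ : (Fin d → ℝ) → V}
    (hψ : ContDiff ℝ 2 ψ) (μ : Fin d) (x : Fin d → ℝ) :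
    pderV μ (cliffordOp Ω E F ψ) x =
      ∑ ν, (E ν (pderV μ (pderV ν ψ) x) + ((Ω * x ν) • F ν (pderV μ ψ x)
        + (if μ = ν then Ω • F ν (ψ x) else 0))) := by
  have hψ1 : Differentiable ℝ ψ := hψ.differentiable (by norm_num)
  have hd : HasFDerivAt (cliffordOp Ω E F ψ)
      (∑ ν, (((E ν).restrictScalars ℝ).comp (fderiv ℝ (pderV ν ψ) x)
        + ((Ω * x ν) • (((F ν).restrictScalars ℝ).comp (fderiv ℝ ψ x))
          + (Ω • (ContinuousLinearMap.proj ν : (Fin d → ℝ) →L[ℝ] ℝ)).smulRight (F ν (ψ x))))) x := by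
    unfold cliffordOp
    refine HasFDerivAt.fun_sum fun ν _ => HasFDerivAt.fun_add ?_ (HasFDerivAt.fun_smul ?_ ?_)
    · exact ((E ν).restrictScalars ℝ).hasFDerivAt.comp x
        (differentiable_pderV hψ ν x).hasFDerivAt
    · exact (ContinuousLinearMap.proj ν : (Fin d → ℝ) →L[ℝ] ℝ).hasFDerivAt.const_mul Ω
    · exact ((F ν).restrictScalars ℝ).hasFDerivAt.comp x (hψ1 x).hasFDerivAt
  rw [pderV, hd.fderiv]
  simp only [_root_.sum_apply, _root_.add_apply,
    ContinuousLinearMap.comp_apply, _root_.smul_apply,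
    ContinuousLinearMap.smulRight_apply, ContinuousLinearMap.proj_apply,
    ContinuousLinearMap.coe_restrictScalars', Pi.single_apply, pderV]
  refine Finset.sum_congr rfl fun ν _ => ?_
  by_cases h : μ = ν
  · simp [h]
  · simp [h, Ne.symm h]

/-- The square of a Clifford-type operator is the harmonic oscillator plus a zeroth order term. -/
lemma cliffordOp_sq {d : ℕ} (Ω : ℝ) (E F : Fin d → V →L[ℂ] V)
    (hE : ∀ μ ν v, E μ (E ν v) + E ν (E μ v) = if μ = ν then (2 : ℝ) • (-v) else 0)
    (hF : ∀ μ ν v, F μ (F ν v) + F ν (F μ v) = if μ = ν then (2 : ℝ) • v else 0)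
    (hEF : ∀ μ ν v, E μ (F ν v) + F ν (E μ v) = 0)
    {ψ : (Fin d → ℝ) → V} (hψ : ContDiff ℝ 2 ψ) (x : Fin d → ℝ) :
    cliffordOp Ω E F (cliffordOp Ω E F ψ) x = Hop Ω ψ x + Ω • ∑ μ, E μ (F μ (ψ x)) := by
  have hsmul : ∀ (A : V →L[ℂ] V) (r : ℝ) (v : V), A (r • v) = r • A v :=
    fun A r v => (A.restrictScalars ℝ).map_smul r v
  have h1 : ∑ μ, ∑ ν, E μ (E ν (pderV μ (pderV ν ψ) x)) = ∑ μ, -pderV μ (pderV μ ψ) x := by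
    refine sum_sum_of_symm_diag _ _ fun μ ν => ?_
    rw [pderV_comm hψ ν μ, hE]
    split_ifs with h
    · rw [h]
    · rfl
  have h2 : ∑ μ, ∑ ν, (Ω * x μ) • (Ω * x ν) • F μ (F ν (ψ x))
      = ∑ μ, (Ω ^ 2 * x μ ^ 2) • ψ x := by
    refine sum_sum_of_symm_diag _ _ fun μ ν => ?_
    rw [smul_comm (Ω * x ν), ← smul_add, ← smul_add, hF]
    split_ifs with h
    · rw [← h]
      module
    · simp
  have h3 : ∑ μ, ∑ ν, (Ω * x ν) • E μ (F ν (pderV μ ψ x))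
      + ∑ μ, ∑ ν, (Ω * x μ) • F μ (E ν (pderV ν ψ x)) = 0 := by
    nth_rewrite 2 [Finset.sum_comm]
    simp only [← Finset.sum_add_distrib, ← smul_add, hEF]
    simp
  have h4 : ∑ μ, ∑ ν, E μ (if μ = ν then Ω • F ν (ψ x) else 0)
      = Ω • ∑ μ, E μ (F μ (ψ x)) := by
    simp [apply_ite, hsmul, Finset.smul_sum]
  have hexp : cliffordOp Ω E F (cliffordOp Ω E F ψ) x
      = ∑ μ, ∑ ν, E μ (E ν (pderV μ (pderV ν ψ) x))
        + ∑ μ, ∑ ν, (Ω * x μ) • (Ω * x ν) • F μ (F ν (ψ x))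
        + (∑ μ, ∑ ν, (Ω * x ν) • E μ (F ν (pderV μ ψ x))
          + ∑ μ, ∑ ν, (Ω * x μ) • F μ (E ν (pderV ν ψ x)))
        + ∑ μ, ∑ ν, E μ (if μ = ν then Ω • F ν (ψ x) else 0) := by
    rw [cliffordOp]
    simp only [pderV_cliffordOp Ω E F hψ]
    simp only [cliffordOp, map_sum, map_add, hsmul, Finset.smul_sum, smul_add,
      Finset.sum_add_distrib]
    abel
  rw [hexp, h1, h2, h3, h4, Hop, Finset.sum_neg_distrib, ← Finset.sum_smul, ← Finset.mul_sum,
    add_zero]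

/-- The Dirac-type operators square to the harmonic oscillator
Hamiltonian plus a fermionic term: `D₁² ψ = Hψ + Ω̃ Σψ` and `D₂² ψ = Hψ − Ω̃ Σψ`
on Schwartz functions. -/
theorem dirac_square_harmonic {d : ℕ} (hd : Even d) (hd2 : 2 ≤ d)
    (Ω : ℝ) (hΩ : 0 < Ω)
    (V : Type*) [NormedAddCommGroup V] [InnerProductSpace ℂ V]
    [FiniteDimensional ℂ V]
    (b bs : Fin d → V →L[ℂ] V)
    (hadj : ∀ (μ : Fin d) (x y : V), ⟪bs μ x, y⟫_ℂ = ⟪x, b μ y⟫_ℂ)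
    (hbb : ∀ μ ν : Fin d, b μ ∘L b ν + b ν ∘L b μ = 0)
    (hbbs : ∀ μ ν : Fin d, b μ ∘L bs ν + bs ν ∘L b μ
      = if μ = ν then (1 : V →L[ℂ] V) else 0)
    (ψ : SchwartzMap ((Fin d) → ℝ) V) (x : Fin d → ℝ) :
    D1op Ω b bs (D1op Ω b bs ⇑ψ) x = Hop Ω ⇑ψ x + Ω • SigmaOp b bs (ψ x) ∧
    D2op Ω b bs (D2op Ω b bs ⇑ψ) x = Hop Ω ⇑ψ x - Ω • SigmaOp b bs (ψ x) := by
  have hψ : ContDiff ℝ 2 ⇑ψ := ψ.smooth 2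
  have B : ∀ μ ν v, b μ (b ν v) = -b ν (b μ v) := fun μ ν v =>
    eq_neg_of_add_eq_zero_left (by simpa using congrArg (fun A => A v) (hbb μ ν))
  have C : ∀ μ ν v, b μ (bs ν v) = (if μ = ν then v else 0) - bs ν (b μ v) := fun μ ν v => by
    have h := congrArg (fun A => A v) (hbbs μ ν)
    refine eq_sub_of_add_eq ?_
    split_ifs with hμν <;> simpa [hμν] using h
  have S : ∀ μ ν v, bs μ (bs ν v) = -bs ν (bs μ v) := fun μ ν v => by
    refine eq_neg_of_add_eq_zero_left (ext_inner_right ℂ fun w => ?_)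
    rw [inner_add_left, hadj, hadj, hadj, hadj, B, inner_neg_right, inner_zero_left]
    simp
  have : IsAddTorsionFree V := .of_isTorsionFree ℝ V
  constructor
  · have hD : D1op Ω b bs = cliffordOp Ω (fun μ => bs μ - b μ) (fun μ => bs μ + b μ) := by
      funext φ y
      refine Finset.sum_congr rfl fun μ _ => ?_
      have hs : ∀ (A : V →L[ℂ] V) (r : ℝ) (v : V), A (r • v) = r • A v :=
        fun A r v => (A.restrictScalars ℝ).map_smul r v
      simp only [annOp, creOp, map_add, map_neg, hs, _root_.sub_apply,
        _root_.add_apply]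
      module
    rw [hD, cliffordOp_sq Ω _ _ ?_ ?_ ?_ hψ x]
    · congr 2
      simp only [SigmaOp, _root_.sum_apply]
      refine Finset.sum_congr rfl fun μ _ => ?_
      have hb : b μ (b μ (ψ x)) = 0 := self_eq_neg.mp (B μ μ (ψ x))
      have hbs : bs μ (bs μ (ψ x)) = 0 := self_eq_neg.mp (S μ μ (ψ x))
      simp [hb, hbs, sub_eq_add_neg]
    · intro μ ν v
      simp only [_root_.sub_apply, map_sub, C, B ν μ, S ν μ, eq_comm (a := ν)]
      split_ifs <;> module
    · intro μ ν v
      simp only [_root_.add_apply, map_add, C, B ν μ, S ν μ, eq_comm (a := ν)]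
      split_ifs <;> module
    · intro μ ν v
      simp only [_root_.add_apply, _root_.sub_apply, map_add, map_sub,
        C, B ν μ, S ν μ, eq_comm (a := ν)]
      split_ifs <;> module
  · have hD : D2op Ω b bs
        = cliffordOp Ω (fun μ => Complex.I • (bs μ + b μ)) (fun μ => Complex.I • (b μ - bs μ)) := by
      funext φ y
      refine Finset.sum_congr rfl fun μ _ => ?_
      have hs : ∀ (A : V →L[ℂ] V) (r : ℝ) (v : V), A (r • v) = r • A v :=
        fun A r v => (A.restrictScalars ℝ).map_smul r v
      simp only [annOp, creOp, map_add, map_neg, hs, _root_.sub_apply,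
        _root_.add_apply, _root_.smul_apply, smul_add, smul_sub, smul_neg,
        smul_comm (Ω * y μ) Complex.I]
      abel
    have hI : ∀ v : V, Complex.I • Complex.I • v = -v := fun v => by
      rw [smul_smul, Complex.I_mul_I, neg_one_smul]
    rw [hD, cliffordOp_sq Ω _ _ ?_ ?_ ?_ hψ x]
    · rw [sub_eq_add_neg, ← smul_neg]
      congr 2
      simp only [SigmaOp, _root_.sum_apply, ← Finset.sum_neg_distrib]
      refine Finset.sum_congr rfl fun μ _ => ?_
      have hb : b μ (b μ (ψ x)) = 0 := self_eq_neg.mp (B μ μ (ψ x))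
      have hbs : bs μ (bs μ (ψ x)) = 0 := self_eq_neg.mp (S μ μ (ψ x))
      simp only [_root_.add_apply, _root_.sub_apply,
        _root_.smul_apply, ContinuousLinearMap.comp_apply, map_smul, map_sub, smul_add, smul_sub, hI,
        hb, hbs]
      abel
    · intro μ ν v
      simp only [_root_.smul_apply, map_smul, hI, _root_.add_apply,
        map_add, ← smul_add, C, B ν μ, S ν μ, eq_comm (a := ν)]
      split_ifs <;> module
    · intro μ ν v
      simp only [_root_.smul_apply, map_smul, hI, _root_.sub_apply,
        map_sub, ← smul_sub, C, B ν μ, S ν μ, eq_comm (a := ν)]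
      split_ifs <;> module
    · intro μ ν v
      simp only [_root_.smul_apply, map_smul, hI, _root_.add_apply,
        _root_.sub_apply, map_add, map_sub, ← smul_sub, ← smul_add,
        C, B ν μ, S ν μ, eq_comm (a := ν)]
      split_ifs <;> module

end
end

section
/- For all Schwartz functions f, ψ ∈ 𝓢(ℝ^d) and each μ ∈ {1,…,d}, the covariant derivatives commute with left Moyal multiplication up to a Moyal multiplication by a derivative: ∇_μ(f ⋆ ψ) − f ⋆ (∇_μ ψ) = ( Σ_ν (G^{-1})_{μν} ∂_ν f ) ⋆ ψ, and ∇̃_μ(f ⋆ ψ) − f ⋆ (∇̃_μ ψ) = (∂_μ f) ⋆ ψ, where (G^{-1})_{μν} = δ_{μν} − ¼Ω̃²(Θ²)_{μν}. -/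
/-!
For fixed `x` the inner integral of `f ⋆ g` is the transform `K` (`fourierS`) of the translated
function `g (x + ·)`, so `(f ⋆ g)(x) = (2π)^{-d} ∫ f(x + ½Θk) K(k) dk` (`moyal_eq`), a bilinear
form in the Schwartz functions `f` and `g` (`moyalBilin`). Two identities then suffice.

* The Leibniz rule `∂_μ (f ⋆ g) = ∂_μ f ⋆ g + f ⋆ ∂_μ g` (`fderiv_moyal`), by differentiating under
  the integral: the dependence of `K` on `x` is a phase `e^{-i⟨k, x⟩}`, and the factor `-i k_μ` this
  produces is the symbol of `∂_μ` acting on `g`.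
* The rule `f ⋆ (x^ν g) = x^ν (f ⋆ g) - (i/2) Σ_ρ Θ_{νρ} ∂_ρ f ⋆ g` (`moyal_coordMul`), by
  integrating by parts in `k`, where skew-symmetry of `Θ` fixes the sign.

Together they give, for the operator `∂_μ + c Σ_ν b_ν x^ν`, the commutator
`(∂_μ f + (i c/2) Σ_ρ (bΘ)_ρ ∂_ρ f) ⋆ ψ` (`moyal_commutator`). With `c = iΩ̃²/2` and `b` the `μ`-th
row of `Θ` the coefficients are `δ_{μρ} - ¼Ω̃²(Θ²)_{μρ}`. With `c = -2i` and `b` the `μ`-th row of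
`Θ⁻¹` they are `2δ_{μρ}`, which the factor `½` in `∇̃_μ` turns into `δ_{μρ}`.
-/

open MeasureTheory Real Matrix

noncomputable section

/-- The covariant derivative `∇_μ = ∂_μ + (i/2)Ω̃² Σ_ν Θ_{μν} x^ν`. -/
def nablaOp {d : ℕ} (Θ : Matrix (Fin d) (Fin d) ℝ) (Ω : ℝ) (μ : Fin d)
    (ψ : (Fin d → ℝ) → ℂ) (x : Fin d → ℝ) : ℂ :=
  fderiv ℝ ψ x (Pi.single μ 1) +
    Complex.I / 2 * ((Ω ^ 2 : ℝ) : ℂ) * ((∑ ν, Θ μ ν * x ν : ℝ) : ℂ) * ψ x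

/-- The covariant derivative `∇̃_μ = ½(∂_μ − 2i Σ_ν (Θ⁻¹)_{μν} x^ν)`. -/
def nablaTOp {d : ℕ} (Θ : Matrix (Fin d) (Fin d) ℝ) (μ : Fin d)
    (ψ : (Fin d → ℝ) → ℂ) (x : Fin d → ℝ) : ℂ :=
  (2 : ℂ)⁻¹ * (fderiv ℝ ψ x (Pi.single μ 1) -
    2 * Complex.I * ((∑ ν, (Θ⁻¹) μ ν * x ν : ℝ) : ℂ) * ψ x)

open LineDeriv FourierTransform SchwartzMap

/-! ### A Fourier transform on `Fin d → ℝ` -/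

/-- The Fourier transform `k ↦ ∫ g(y) e^{i⟨k, y⟩} dy` on Schwartz functions of `Fin d → ℝ`. Mathlib's
inverse Fourier transform has kernel `e^{2πi⟨k, y⟩}` and needs an inner product space, hence the
transfer to `EuclideanSpace` and the dilation by `(2π)⁻¹`. -/
def fourierS (d : ℕ) : SchwartzMap (Fin d → ℝ) ℂ →L[ℂ] SchwartzMap (Fin d → ℝ) ℂ :=
  compCLMOfContinuousLinearEquiv ℂ
      ((ContinuousLinearEquiv.smulLeft (Units.mk0 (2 * π)⁻¹ (by positivity) : ℝˣ)).trans
        (EuclideanSpace.equiv (Fin d) ℝ).symm) ∘L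
    fourierInvCLM ℂ (SchwartzMap (EuclideanSpace ℝ (Fin d)) ℂ) ∘L
    compCLMOfContinuousLinearEquiv ℂ (EuclideanSpace.equiv (Fin d) ℝ)

/-- The pairing `dotR` is the inner product of `EuclideanSpace`, up to the rescaling by `2π`
built into `fourierS`. -/
theorem inner_scaled_eq_dotR {d : ℕ} (m : Fin d → ℝ) (y : EuclideanSpace ℝ (Fin d)) :
    2 * π * inner ℝ y ((EuclideanSpace.equiv (Fin d) ℝ).symm ((2 * π)⁻¹ • m))
      = dotR m (EuclideanSpace.equiv (Fin d) ℝ y) := by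
  rw [PiLp.inner_apply, dotR, Finset.mul_sum]
  refine Finset.sum_congr rfl fun i _ => ?_
  simp
  field_simp

theorem fourierS_apply {d : ℕ} (g : SchwartzMap (Fin d → ℝ) ℂ) (k : Fin d → ℝ) :
    fourierS d g k = ∫ y, g y * Complex.exp (Complex.I * (dotR k y : ℂ)) := by
  simp only [fourierS, ContinuousLinearMap.comp_apply, fourierInvCLM_apply,
    compCLMOfContinuousLinearEquiv_apply, Function.comp_apply, fourierInv_coe]
  rw [Real.fourierInv_eq', ← (PiLp.volume_preserving_toLp (Fin d)).integral_comp
    (MeasurableEquiv.toLp 2 (Fin d → ℝ)).measurableEmbedding]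
  refine integral_congr_ae (Filter.Eventually.of_forall fun y => ?_)
  have h := inner_scaled_eq_dotR k (WithLp.toLp 2 y)
  have h2 : ((ContinuousLinearEquiv.smulLeft (Units.mk0 (2 * π)⁻¹ (by positivity) : ℝˣ)).trans
        (EuclideanSpace.equiv (Fin d) ℝ).symm) k
      = (EuclideanSpace.equiv (Fin d) ℝ).symm ((2 * π)⁻¹ • k) := rfl
  simp only [h2, h, smul_eq_mul]
  rw [mul_comm, mul_comm Complex.I]
  rfl

@[fun_prop]
theorem hasTemperateGrowth_dotR {d : ℕ} (m : Fin d → ℝ) :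
    (fun y : Fin d → ℝ => dotR m y).HasTemperateGrowth := by
  convert (∑ i, m i • ContinuousLinearMap.proj (R := ℝ) (φ := fun _ : Fin d => ℝ)
    i).hasTemperateGrowth using 2 with y
  simp [dotR]

theorem lineDerivOp_fourierS {d : ℕ} (g : SchwartzMap (Fin d → ℝ) ℂ) (m : Fin d → ℝ) :
    ∂_{m} (fourierS d g) = Complex.I • fourierS d (smulLeftCLM ℂ (dotR m) g) := by
  simp only [fourierS, ContinuousLinearMap.comp_apply, fourierInvCLM_apply,
    lineDerivOp_compCLMOfContinuousLinearEquiv, lineDerivOp_fourierInv_eq]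
  refine Eq.trans ?_ (ContinuousLinearMap.map_smul _ _ _)
  congr 1
  refine Eq.trans ?_ (ContinuousLinearMap.map_smul (fourierInvCLM ℂ _) _ _)
  change fourierInvCLM ℂ (SchwartzMap (EuclideanSpace ℝ (Fin d)) ℂ) _ = fourierInvCLM ℂ _ _
  congr 1
  ext y
  have h2 : ((ContinuousLinearEquiv.smulLeft (Units.mk0 (2 * π)⁻¹ (by positivity) : ℝˣ)).trans
        (EuclideanSpace.equiv (Fin d) ℝ).symm) m
      = (EuclideanSpace.equiv (Fin d) ℝ).symm ((2 * π)⁻¹ • m) := rfl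
  rw [h2]
  have h := inner_scaled_eq_dotR m y
  simp only [_root_.smul_apply, compCLMOfContinuousLinearEquiv_apply, Function.comp_apply]
  rw [smulLeftCLM_apply_apply (by fun_prop), smulLeftCLM_apply_apply (by fun_prop), ← h]
  simp only [compCLMOfContinuousLinearEquiv_apply, Function.comp_apply, Complex.real_smul,
    smul_eq_mul]
  push_cast
  ring

theorem fourierS_lineDerivOp {d : ℕ} (g : SchwartzMap (Fin d → ℝ) ℂ) (m k : Fin d → ℝ) :
    fourierS d (∂_{m} g) k = -Complex.I * dotR k m * fourierS d g k := by
  have h1 : compCLMOfContinuousLinearEquiv ℂ (EuclideanSpace.equiv (Fin d) ℝ) (∂_{m} g)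
      = ∂_{(EuclideanSpace.equiv (Fin d) ℝ).symm m}
        (compCLMOfContinuousLinearEquiv ℂ (EuclideanSpace.equiv (Fin d) ℝ) g) := by
    rw [lineDerivOp_compCLMOfContinuousLinearEquiv, ContinuousLinearEquiv.apply_symm_apply]
  have h2 : ((ContinuousLinearEquiv.smulLeft (Units.mk0 (2 * π)⁻¹ (by positivity) : ℝˣ)).trans
        (EuclideanSpace.equiv (Fin d) ℝ).symm) k
      = (EuclideanSpace.equiv (Fin d) ℝ).symm ((2 * π)⁻¹ • k) := rfl
  have h := inner_scaled_eq_dotR k ((EuclideanSpace.equiv (Fin d) ℝ).symm m)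
  rw [real_inner_comm] at h
  simp only [fourierS, ContinuousLinearMap.comp_apply, fourierInvCLM_apply, h1,
    fourierInv_lineDerivOp_eq, compCLMOfContinuousLinearEquiv_apply, Function.comp_apply,
    _root_.smul_apply, h2]
  rw [smulLeftCLM_apply_apply (by fun_prop)]
  simp only [ContinuousLinearEquiv.apply_symm_apply] at h
  rw [← h]
  simp only [Complex.real_smul, smul_eq_mul]
  push_cast
  ring

/-! ### The Moyal product through the Fourier transform -/

theorem fourierS_translate {d : ℕ} (g : SchwartzMap (Fin d → ℝ) ℂ) (x k : Fin d → ℝ) :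
    fourierS d (g.compSubConstCLM ℂ (-x)) k
      = Complex.exp (-Complex.I * (dotR k x : ℂ)) * fourierS d g k := by
  simp only [fourierS_apply, compSubConstCLM_apply, sub_neg_eq_add]
  rw [← integral_const_mul, ← integral_add_right_eq_self
    (fun y => Complex.exp (-Complex.I * (dotR k x : ℂ)) *
      (g y * Complex.exp (Complex.I * (dotR k y : ℂ)))) x]
  refine integral_congr_ae (Filter.Eventually.of_forall fun y => ?_)
  have h : dotR k (y + x) = dotR k y + dotR k x := by
    simp [dotR, mul_add, Finset.sum_add_distrib]
  simp only [h]
  rw [mul_left_comm, ← Complex.exp_add]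
  push_cast
  ring_nf

/-- The inner integral of the Moyal product is the transform of the translate `g (x + ·)`, so the
product is a single integral against a Schwartz function of `k`. -/
theorem moyal_eq_s11 {d : ℕ} (Θ : Matrix (Fin d) (Fin d) ℝ) (f : (Fin d → ℝ) → ℂ)
    (g : SchwartzMap (Fin d → ℝ) ℂ) (x : Fin d → ℝ) :
    moyal Θ f g x = ((2 * π) ^ d : ℝ)⁻¹ • ∫ k, f (x + (2 : ℝ)⁻¹ • Θ.mulVec k) *
      fourierS d (g.compSubConstCLM ℂ (-x)) k := by
  unfold moyal
  congr 1
  refine integral_congr_ae (Filter.Eventually.of_forall fun k => ?_)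
  simp only [fourierS_apply, compSubConstCLM_apply, sub_neg_eq_add, ← integral_const_mul]
  refine integral_congr_ae (Filter.Eventually.of_forall fun y => ?_)
  simp only [add_comm x y]
  ring

theorem continuous_affine {d : ℕ} (Θ : Matrix (Fin d) (Fin d) ℝ) (x : Fin d → ℝ) :
    Continuous fun k : Fin d → ℝ => x + (2 : ℝ)⁻¹ • Θ.mulVec k := by
  have : Continuous fun k : Fin d → ℝ => Θ.mulVec k :=
    continuous_const.matrix_mulVec continuous_id
  fun_prop

theorem integrable_moyal {d : ℕ} (Θ : Matrix (Fin d) (Fin d) ℝ)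
    (f F : SchwartzMap (Fin d → ℝ) ℂ) (x : Fin d → ℝ) :
    Integrable fun k => f (x + (2 : ℝ)⁻¹ • Θ.mulVec k) * F k := by
  refine F.integrable.bdd_mul (c := SchwartzMap.seminorm ℝ 0 0 f) ?_ ?_
  · exact (f.continuous.comp (continuous_affine Θ x)).aestronglyMeasurable
  · exact Filter.Eventually.of_forall fun k => norm_le_seminorm ℝ f _

/-- The Moyal product at a point, as a bilinear form on Schwartz functions. -/
def moyalBilin {d : ℕ} (Θ : Matrix (Fin d) (Fin d) ℝ) (x : Fin d → ℝ) :
    SchwartzMap (Fin d → ℝ) ℂ →ₗ[ℂ] SchwartzMap (Fin d → ℝ) ℂ →ₗ[ℂ] ℂ :=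
  LinearMap.mk₂ ℂ (fun f g => moyal Θ f g x)
    (fun f f' g => by
      simp only [moyal_eq_s11, _root_.add_apply, add_mul]
      rw [integral_add (integrable_moyal ..) (integrable_moyal ..), smul_add])
    (fun c f g => by
      simp only [moyal_eq_s11, _root_.smul_apply, smul_eq_mul, mul_assoc]
      rw [integral_const_mul, mul_smul_comm])
    (fun f g g' => by
      simp only [moyal_eq_s11, map_add, _root_.add_apply, mul_add]
      rw [integral_add (integrable_moyal ..) (integrable_moyal ..), smul_add])
    (fun c f g => by
      simp only [moyal_eq_s11, map_smul, _root_.smul_apply, smul_eq_mul, mul_left_comm _ c]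
      rw [integral_const_mul, mul_smul_comm])

theorem moyalBilin_apply {d : ℕ} (Θ : Matrix (Fin d) (Fin d) ℝ) (x : Fin d → ℝ)
    (f g : SchwartzMap (Fin d → ℝ) ℂ) : moyalBilin Θ x f g = moyal Θ f g x := rfl

/-! ### Multiplication by a coordinate -/

/-- Multiplication by the coordinate `y ↦ y ν` on Schwartz functions. -/
def coordMul {d : ℕ} (ν : Fin d) (g : SchwartzMap (Fin d → ℝ) ℂ) : SchwartzMap (Fin d → ℝ) ℂ :=
  smulLeftCLM ℂ (dotR (Pi.single ν (1 : ℝ))) g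

theorem coordMul_apply {d : ℕ} (ν : Fin d) (g : SchwartzMap (Fin d → ℝ) ℂ) (y : Fin d → ℝ) :
    coordMul ν g y = (y ν : ℂ) * g y := by
  rw [coordMul, smulLeftCLM_apply_apply (by fun_prop)]
  simp [dotR, Pi.single_apply]

theorem hasFDerivAt_comp_affine {d : ℕ} (Θ : Matrix (Fin d) (Fin d) ℝ)
    (f : SchwartzMap (Fin d → ℝ) ℂ) (x k : Fin d → ℝ) :
    HasFDerivAt (fun k => f (x + (2 : ℝ)⁻¹ • Θ.mulVec k))
      ((fderiv ℝ f (x + (2 : ℝ)⁻¹ • Θ.mulVec k)).comp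
        ((2 : ℝ)⁻¹ • LinearMap.toContinuousLinearMap Θ.mulVecLin)) k := by
  refine (f.hasFDerivAt _).comp k ?_
  exact (((2 : ℝ)⁻¹ • LinearMap.toContinuousLinearMap Θ.mulVecLin).hasFDerivAt).const_add x

theorem single_expand {d : ℕ} (v : Fin d → ℝ) : v = ∑ ρ, v ρ • Pi.single ρ (1 : ℝ) := by
  ext i; simp [Finset.sum_apply, Pi.single_apply]

/-- By skew-symmetry, `∂/∂k_ν` of `f (x + ½Θk)` is `-½ Σ_ρ Θ_{νρ} (∂_ρ f)(x + ½Θk)`. -/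
theorem fderiv_comp_affine {d : ℕ} (Θ : Matrix (Fin d) (Fin d) ℝ) (hskew : Θᵀ = -Θ)
    (f : SchwartzMap (Fin d → ℝ) ℂ) (x k : Fin d → ℝ) (ν : Fin d) :
    fderiv ℝ (fun k => f (x + (2 : ℝ)⁻¹ • Θ.mulVec k)) k (Pi.single ν 1)
      = ∑ ρ, -((2 : ℂ)⁻¹ * (Θ ν ρ : ℂ)) *
        (∂_{(Pi.single ρ (1 : ℝ) : Fin d → ℝ)} f) (x + (2 : ℝ)⁻¹ • Θ.mulVec k) := by
  have h1 : ((2 : ℝ)⁻¹ • LinearMap.toContinuousLinearMap Θ.mulVecLin) (Pi.single ν 1)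
      = ∑ ρ, (-((2 : ℝ)⁻¹ * Θ ν ρ)) • Pi.single ρ (1 : ℝ) := by
    rw [← single_expand fun ρ => -((2 : ℝ)⁻¹ * Θ ν ρ)]
    ext ρ
    have := congrFun (congrFun hskew ν) ρ
    simp only [Matrix.transpose_apply, Matrix.neg_apply] at this
    simp [this]
  rw [(hasFDerivAt_comp_affine Θ f x k).fderiv, ContinuousLinearMap.comp_apply, h1, map_sum]
  refine Finset.sum_congr rfl fun ρ _ => ?_
  rw [map_smul, lineDerivOp_apply_eq_fderiv, Complex.real_smul]
  push_cast
  ring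

/-- `f ⋆ (x^ν g) = x^ν (f ⋆ g) - (i/2) Σ_ρ Θ_{νρ} (∂_ρ f) ⋆ g`: under the inner integral the
coordinate at the point `x + y` is `x^ν + y^ν`; the factor `y^ν` becomes `-i ∂/∂k_ν` of the
transform, and integration by parts moves this derivative onto `f (x + ½Θk)`. -/
theorem moyal_coordMul {d : ℕ} (Θ : Matrix (Fin d) (Fin d) ℝ) (hskew : Θᵀ = -Θ)
    (f g : SchwartzMap (Fin d → ℝ) ℂ) (x : Fin d → ℝ) (ν : Fin d) :
    moyalBilin Θ x f (coordMul ν g) = (x ν : ℂ) * moyalBilin Θ x f g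
      - Complex.I / 2 * ∑ ρ, (Θ ν ρ : ℂ) *
        moyalBilin Θ x (∂_{(Pi.single ρ (1 : ℝ) : Fin d → ℝ)} f) g := by
  set e : Fin d → ℝ := Pi.single ν 1 with he
  set g' := g.compSubConstCLM ℂ (-x) with hg'
  have htr : (coordMul ν g).compSubConstCLM ℂ (-x)
      = (x ν : ℂ) • g' + coordMul ν g' := by
    ext y
    simp only [compSubConstCLM_apply, coordMul_apply, _root_.add_apply, _root_.smul_apply,
      smul_eq_mul, hg', sub_neg_eq_add, Pi.add_apply]
    push_cast
    ring
  have hF : fourierS d (coordMul ν g') = -Complex.I • ∂_{e} (fourierS d g') := by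
    rw [lineDerivOp_fourierS, smul_smul]
    simp [coordMul, he]
  set K := fourierS d g' with hK
  have hint (ρ : Fin d) : Integrable fun k => -((2 : ℂ)⁻¹ * (Θ ν ρ : ℂ)) *
      ((∂_{(Pi.single ρ (1 : ℝ) : Fin d → ℝ)} f) (x + (2 : ℝ)⁻¹ • Θ.mulVec k) * K k) :=
    (integrable_moyal Θ _ K x).const_mul _
  have ibp : ∫ k, f (x + (2 : ℝ)⁻¹ • Θ.mulVec k) * (∂_{e} K) k
      = -∫ k, ∑ ρ, -((2 : ℂ)⁻¹ * (Θ ν ρ : ℂ)) *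
        ((∂_{(Pi.single ρ (1 : ℝ) : Fin d → ℝ)} f) (x + (2 : ℝ)⁻¹ • Θ.mulVec k) * K k) := by
    have hD (k : Fin d → ℝ) :
        fderiv ℝ (fun k => f (x + (2 : ℝ)⁻¹ • Θ.mulVec k)) k e * K k
          = ∑ ρ, -((2 : ℂ)⁻¹ * (Θ ν ρ : ℂ)) *
            ((∂_{(Pi.single ρ (1 : ℝ) : Fin d → ℝ)} f) (x + (2 : ℝ)⁻¹ • Θ.mulVec k) * K k) := by
      rw [fderiv_comp_affine Θ hskew, Finset.sum_mul]
      simp only [mul_assoc]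
    simp only [← hD]
    refine integral_mul_fderiv_eq_neg_fderiv_mul_of_integrable (𝕜 := ℂ) ?_
      (integrable_moyal Θ f (∂_{e} K) x) (integrable_moyal Θ f K x)
      (fun k _ => (hasFDerivAt_comp_affine Θ f x k).differentiableAt)
      (fun k _ => K.differentiableAt)
    simp only [hD]
    exact integrable_finsetSum _ fun ρ _ => hint ρ
  rw [integral_finsetSum _ fun ρ _ => hint ρ] at ibp
  simp only [integral_const_mul] at ibp
  have hsplit : ∫ k, f (x + (2 : ℝ)⁻¹ • Θ.mulVec k) *
      fourierS d ((coordMul ν g).compSubConstCLM ℂ (-x)) k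
      = (x ν : ℂ) * (∫ k, f (x + (2 : ℝ)⁻¹ • Θ.mulVec k) * K k)
        - Complex.I * ∫ k, f (x + (2 : ℝ)⁻¹ • Θ.mulVec k) * (∂_{e} K) k := by
    rw [htr, map_add, map_smul, hF, ← integral_const_mul, ← integral_const_mul, ← integral_sub
      ((integrable_moyal ..).const_mul _) ((integrable_moyal ..).const_mul _)]
    refine integral_congr_ae (Filter.Eventually.of_forall fun k => ?_)
    simp only [_root_.add_apply, _root_.smul_apply, smul_eq_mul]
    ring
  simp only [moyalBilin_apply, moyal_eq_s11, hsplit, ibp, Complex.real_smul, ← hg', ← hK]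
  simp only [mul_sub, Finset.mul_sum, ← Finset.sum_neg_distrib]
  congr 1
  · ring
  · refine Finset.sum_congr rfl fun ρ _ => ?_
    ring

/-! ### The Leibniz rule -/

/-- The linear form `dotR k`, with its continuity. -/
def dotCLM {d : ℕ} (k : Fin d → ℝ) : (Fin d → ℝ) →L[ℝ] ℝ :=
  ∑ i, k i • ContinuousLinearMap.proj (R := ℝ) (φ := fun _ : Fin d => ℝ) i

theorem dotCLM_apply {d : ℕ} (k x : Fin d → ℝ) : dotCLM k x = dotR k x := by
  simp [dotCLM, dotR]

theorem norm_dotCLM_le {d : ℕ} (k : Fin d → ℝ) : ‖dotCLM k‖ ≤ d * ‖k‖ := by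
  refine ContinuousLinearMap.opNorm_le_bound _ (by positivity) fun x => ?_
  rw [dotCLM_apply, dotR]
  refine (norm_sum_le _ _).trans ?_
  calc ∑ i, ‖k i * x i‖ ≤ ∑ _i : Fin d, ‖k‖ * ‖x‖ := by
        refine Finset.sum_le_sum fun i _ => ?_
        rw [norm_mul]
        exact mul_le_mul (norm_le_pi_norm k i) (norm_le_pi_norm x i) (norm_nonneg _) (norm_nonneg _)
    _ = d * ‖k‖ * ‖x‖ := by simp [mul_assoc]

theorem continuous_dotCLM {d : ℕ} : Continuous (dotCLM : (Fin d → ℝ) → _) := by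
  unfold dotCLM
  fun_prop

theorem hasFDerivAt_phase {d : ℕ} (k x : Fin d → ℝ) :
    HasFDerivAt (fun x => Complex.exp (-Complex.I * (dotR k x : ℂ)))
      (Complex.exp (-Complex.I * (dotR k x : ℂ)) •
        (-Complex.I • Complex.ofRealCLM.comp (dotCLM k))) x := by
  have h : HasFDerivAt (fun x => (dotR k x : ℂ)) (Complex.ofRealCLM.comp (dotCLM k)) x := by
    have := (Complex.ofRealCLM.comp (dotCLM k)).hasFDerivAt (x := x)
    simpa only [ContinuousLinearMap.comp_apply, Function.comp_def, ContinuousLinearMap.coe_comp,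
      dotCLM_apply, Complex.ofRealCLM_apply] using this
  exact (h.const_mul (-Complex.I)).cexp

theorem norm_phase_s11 {d : ℕ} (k x : Fin d → ℝ) :
    ‖Complex.exp (-Complex.I * (dotR k x : ℂ))‖ = 1 := by
  rw [Complex.norm_exp]; simp

/-- The Leibniz rule `∂_m (f ⋆ g) = (∂_m f) ⋆ g + f ⋆ (∂_m g)`, by differentiation under the
integral sign: after the inner integral has been turned into the phase `e^{-i⟨k, x⟩}` times the
transform `G` of `g`, the `x`-derivative is dominated by a multiple of `(1 + ‖k‖) ‖G k‖`. -/
theorem fderiv_moyal {d : ℕ} (Θ : Matrix (Fin d) (Fin d) ℝ)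
    (f g : SchwartzMap (Fin d → ℝ) ℂ) (x : Fin d → ℝ) (m : Fin d → ℝ) :
    fderiv ℝ (moyal Θ f g) x m
      = moyalBilin Θ x (∂_{m} f) g + moyalBilin Θ x f (∂_{m} g) := by
  set G := fourierS d g with hG
  let a : (Fin d → ℝ) → (Fin d → ℝ) → (Fin d → ℝ) := fun x k => x + (2 : ℝ)⁻¹ • Θ.mulVec k
  let E : (Fin d → ℝ) → (Fin d → ℝ) → ℂ := fun x k => Complex.exp (-Complex.I * (dotR k x : ℂ))
  let F : (Fin d → ℝ) → (Fin d → ℝ) → ℂ := fun x k => f (a x k) * (E x k * G k)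
  let F' : (Fin d → ℝ) → (Fin d → ℝ) → (Fin d → ℝ) →L[ℝ] ℂ := fun x k =>
    f (a x k) • G k • E x k • (-Complex.I • Complex.ofRealCLM.comp (dotCLM k))
      + (E x k * G k) • fderiv ℝ f (a x k)
  let bound : (Fin d → ℝ) → ℝ := fun k =>
    SchwartzMap.seminorm ℝ 0 0 f * d * (‖k‖ ^ 1 * ‖G k‖)
      + SchwartzMap.seminorm ℝ 0 0 (fderivCLM ℝ _ _ f) * ‖G k‖
  have ha (x) : Continuous (a x) := continuous_affine Θ x
  have hE (x) : Continuous (E x) := by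
    simp only [E, dotR]
    fun_prop
  have hF' (x) : Continuous (F' x) := by
    have h1 : Continuous fun k => fderiv ℝ f (a x k) :=
      (fderivCLM ℝ _ _ f).continuous.comp (ha x)
    have h2 := f.continuous.comp (ha x)
    have h3 := G.continuous
    have h4 := hE x
    have h5 : Continuous fun k : Fin d → ℝ => Complex.ofRealCLM.comp (dotCLM k) :=
      continuous_const.clm_comp continuous_dotCLM
    have h6 : Continuous fun k => E x k • (-Complex.I • Complex.ofRealCLM.comp (dotCLM k)) :=
      h4.fun_smul (h5.fun_const_smul (-Complex.I))
    have h7 : Continuous fun k => f (a x k) • G k • E x k •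
        (-Complex.I • Complex.ofRealCLM.comp (dotCLM k)) := h2.smul (h3.smul h6)
    have h8 : Continuous fun k => (E x k * G k) • fderiv ℝ f (a x k) := (h4.mul h3).smul h1
    exact h7.add h8
  have hbound_int : Integrable bound :=
    ((G.integrable_pow_mul volume 1).const_mul _).add (G.integrable.norm.const_mul _)
  have hbound (x k) : ‖F' x k‖ ≤ bound k := by
    refine (norm_add_le _ _).trans (add_le_add ?_ ?_)
    · simp only [norm_smul, norm_neg, Complex.norm_I, E, norm_phase_s11, one_mul]
      have h1 : ‖Complex.ofRealCLM.comp (dotCLM k)‖ ≤ d * ‖k‖ := by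
        refine (ContinuousLinearMap.opNorm_comp_le _ _).trans ?_
        rw [Complex.ofRealCLM_norm, one_mul]
        exact norm_dotCLM_le k
      calc ‖f (a x k)‖ * (‖G k‖ * ‖Complex.ofRealCLM.comp (dotCLM k)‖)
          ≤ SchwartzMap.seminorm ℝ 0 0 f * (‖G k‖ * (d * ‖k‖)) := by
            gcongr
            exact norm_le_seminorm ℝ f _
        _ = _ := by ring
    · rw [norm_smul, norm_mul, norm_phase_s11, one_mul, mul_comm]
      gcongr
      exact norm_le_seminorm ℝ (fderivCLM ℝ _ _ f) _
  have hFint (x) : Integrable (F x) := by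
    simpa only [F, E, hG, ← fourierS_translate] using integrable_moyal Θ f _ x
  have hdiff (x k) : HasFDerivAt (F · k) (F' x k) x := by
    have h1 : HasFDerivAt (fun x => f (a x k)) (fderiv ℝ f (a x k)) x := by
      have h2 : HasFDerivAt (fun x => a x k) (ContinuousLinearMap.id ℝ _) x :=
        (hasFDerivAt_id x).add_const _
      simpa only [ContinuousLinearMap.comp_id, Function.comp_def]
        using (f.hasFDerivAt (a x k)).comp x h2
    exact h1.mul ((hasFDerivAt_phase k x).mul_const (G k))
  have hmain : HasFDerivAt (fun x => ∫ k, F x k) (∫ k, F' x k) x :=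
    hasFDerivAt_integral_of_dominated_of_fderiv_le (𝕜 := ℝ) Filter.univ_mem
      (Filter.Eventually.of_forall fun x => (hFint x).aestronglyMeasurable) (hFint x)
      (hF' x).aestronglyMeasurable (Filter.Eventually.of_forall fun k x _ => hbound x k)
      hbound_int (Filter.Eventually.of_forall fun k x _ => hdiff x k)
  have hF'int : Integrable (F' x) := hbound_int.mono' (hF' x).aestronglyMeasurable
    (Filter.Eventually.of_forall fun k => hbound x k)
  have hmoyal : moyal Θ f g = fun x => ((2 * π) ^ d : ℝ)⁻¹ • ∫ k, F x k := by
    ext x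
    simp only [moyal_eq_s11, fourierS_translate, F, E, a, hG]
  rw [hmoyal, (hmain.fun_const_smul _).fderiv, _root_.smul_apply,
    ContinuousLinearMap.integral_apply hF'int, moyalBilin_apply, moyalBilin_apply, moyal_eq_s11,
    moyal_eq_s11, ← smul_add, ← integral_add (integrable_moyal ..) (integrable_moyal ..)]
  congr 1
  refine integral_congr_ae (Filter.Eventually.of_forall fun k => ?_)
  simp only [fourierS_translate, fourierS_lineDerivOp, F', a, E, _root_.add_apply,
    _root_.smul_apply, ContinuousLinearMap.comp_apply, dotCLM_apply, smul_eq_mul,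
    Complex.ofRealCLM_apply, lineDerivOp_apply_eq_fderiv, ← hG]
  ring

/-! ### Commutators with first-order operators -/

/-- The commutator of `∂_μ + c ⟨b, x⟩` with left Moyal multiplication by `f`, for an arbitrary
constant `c` and row vector `b`. Both covariant derivatives are of this form, up to a scalar. -/
theorem moyal_commutator {d : ℕ} (Θ : Matrix (Fin d) (Fin d) ℝ) (hskew : Θᵀ = -Θ)
    (f ψ : SchwartzMap (Fin d → ℝ) ℂ) (x : Fin d → ℝ) (μ : Fin d) (c : ℂ) (b : Fin d → ℝ) :
    (fderiv ℝ (moyal Θ f ψ) x (Pi.single μ 1)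
      + c * ((∑ ν, b ν * x ν : ℝ) : ℂ) * moyal Θ f ψ x)
      - moyal Θ f (fun y => fderiv ℝ ψ y (Pi.single μ 1)
        + c * ((∑ ν, b ν * y ν : ℝ) : ℂ) * ψ y) x
    = moyal Θ (fun y => fderiv ℝ f y (Pi.single μ 1)
        + c * (Complex.I / 2) * ∑ ρ, ((b ᵥ* Θ) ρ : ℂ) * fderiv ℝ f y (Pi.single ρ 1)) ψ x := by
  have hψ : (fun y => fderiv ℝ ψ y (Pi.single μ 1) + c * ((∑ ν, b ν * y ν : ℝ) : ℂ) * ψ y)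
      = ⇑(∂_{(Pi.single μ (1 : ℝ) : Fin d → ℝ)} ψ
        + c • ∑ ν, (b ν : ℂ) • coordMul ν ψ) := by
    ext y
    simp only [_root_.add_apply, _root_.smul_apply, _root_.sum_apply, coordMul_apply,
      smul_eq_mul, lineDerivOp_apply_eq_fderiv]
    push_cast
    simp only [mul_assoc, Finset.sum_mul]
  have hf : (fun y => fderiv ℝ f y (Pi.single μ 1)
        + c * (Complex.I / 2) * ∑ ρ, ((b ᵥ* Θ) ρ : ℂ) * fderiv ℝ f y (Pi.single ρ 1))
      = ⇑(∂_{(Pi.single μ (1 : ℝ) : Fin d → ℝ)} f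
        + (c * (Complex.I / 2)) • ∑ ρ, ((b ᵥ* Θ) ρ : ℂ) •
          ∂_{(Pi.single ρ (1 : ℝ) : Fin d → ℝ)} f) := by
    ext y
    simp only [_root_.add_apply, _root_.smul_apply, _root_.sum_apply,
      smul_eq_mul, lineDerivOp_apply_eq_fderiv]
  rw [hψ, hf, fderiv_moyal, ← moyalBilin_apply, ← moyalBilin_apply, ← moyalBilin_apply]
  simp only [map_add, map_smul, map_sum, LinearMap.add_apply, LinearMap.smul_apply,
    LinearMap.sum_apply, smul_eq_mul, moyal_coordMul Θ hskew]
  have hswap : ∑ ρ, ((b ᵥ* Θ) ρ : ℂ) *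
        moyalBilin Θ x (∂_{(Pi.single ρ (1 : ℝ) : Fin d → ℝ)} f) ψ
      = ∑ ν, (b ν : ℂ) * ∑ ρ, (Θ ν ρ : ℂ) *
        moyalBilin Θ x (∂_{(Pi.single ρ (1 : ℝ) : Fin d → ℝ)} f) ψ := by
    simp only [Matrix.vecMul, dotProduct, Finset.mul_sum]
    rw [Finset.sum_comm]
    refine Finset.sum_congr rfl fun ρ _ => ?_
    push_cast
    rw [Finset.sum_mul]
    exact Finset.sum_congr rfl fun ν _ => by ring
  rw [hswap]
  have hsum (B : ℂ) (S : Fin d → ℂ) : ∑ ν, (b ν : ℂ) * ((x ν : ℂ) * B - Complex.I / 2 * S ν)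
      = (∑ ν, (b ν : ℂ) * (x ν : ℂ)) * B - Complex.I / 2 * ∑ ν, (b ν : ℂ) * S ν := by
    rw [Finset.sum_mul, Finset.mul_sum, ← Finset.sum_sub_distrib]
    exact Finset.sum_congr rfl fun ν _ => by ring
  rw [hsum]
  push_cast
  ring

theorem moyal_const_mul_left {d : ℕ} (Θ : Matrix (Fin d) (Fin d) ℝ) (c : ℂ)
    (f g : (Fin d → ℝ) → ℂ) (x : Fin d → ℝ) :
    moyal Θ (fun y => c * f y) g x = c * moyal Θ f g x := by
  simp only [moyal, mul_assoc, integral_const_mul, mul_smul_comm]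

theorem moyal_const_mul_right {d : ℕ} (Θ : Matrix (Fin d) (Fin d) ℝ) (c : ℂ)
    (f g : (Fin d → ℝ) → ℂ) (x : Fin d → ℝ) :
    moyal Θ f (fun y => c * g y) x = c * moyal Θ f g x := by
  simp only [moyal, mul_assoc, mul_left_comm _ c, integral_const_mul, mul_smul_comm]

/-- The covariant derivatives commute with left Moyal multiplication
up to Moyal multiplication by a derivative:
`∇_μ(f ⋆ ψ) − f ⋆ ∇_μψ = (Σ_ν (G⁻¹)_{μν} ∂_ν f) ⋆ ψ` and
`∇̃_μ(f ⋆ ψ) − f ⋆ ∇̃_μψ = (∂_μ f) ⋆ ψ`, where `G⁻¹ = 1 − ¼Ω̃²Θ²`. -/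
theorem nabla_moyal_commutator {d : ℕ} (hd : Even d) (hd2 : 2 ≤ d)
    (Θ : Matrix (Fin d) (Fin d) ℝ) (hskew : Θᵀ = -Θ) (hdet : Θ.det ≠ 0)
    (Ω : ℝ) (hΩ : 0 < Ω)
    (f ψ : SchwartzMap ((Fin d) → ℝ) ℂ) (μ : Fin d) (x : Fin d → ℝ) :
    nablaOp Θ Ω μ (moyal Θ ⇑f ⇑ψ) x - moyal Θ ⇑f (nablaOp Θ Ω μ ⇑ψ) x
      = moyal Θ (fun y => ∑ ν,
          (((((1 : Matrix (Fin d) (Fin d) ℝ) - (Ω ^ 2 / 4) • (Θ * Θ)) μ ν : ℝ)) : ℂ) *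
            fderiv ℝ ⇑f y (Pi.single ν 1)) ⇑ψ x ∧
    nablaTOp Θ μ (moyal Θ ⇑f ⇑ψ) x - moyal Θ ⇑f (nablaTOp Θ μ ⇑ψ) x
      = moyal Θ (fun y => fderiv ℝ ⇑f y (Pi.single μ 1)) ⇑ψ x := by
  constructor
  · have h := moyal_commutator Θ hskew f ψ x μ (Complex.I / 2 * ((Ω ^ 2 : ℝ) : ℂ)) (Θ μ)
    refine h.trans ?_
    congr 1
    ext y
    have hc : Complex.I / 2 * ((Ω ^ 2 : ℝ) : ℂ) * (Complex.I / 2) = -((Ω ^ 2 / 4 : ℝ) : ℂ) := by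
      push_cast
      linear_combination ((Ω : ℂ) ^ 2 / 4) * Complex.I_mul_I
    have hrow (ρ : Fin d) : (Θ μ ᵥ* Θ) ρ = (Θ * Θ) μ ρ := rfl
    simp only [hc, hrow, Matrix.sub_apply, Matrix.smul_apply, Matrix.one_apply, smul_eq_mul,
      Complex.ofReal_sub, Complex.ofReal_mul, sub_mul, Finset.sum_sub_distrib, Finset.mul_sum,
      apply_ite Complex.ofReal, Complex.ofReal_one, Complex.ofReal_zero, ite_mul, one_mul, zero_mul,
      Finset.sum_ite_eq, Finset.mem_univ, if_true, mul_assoc, neg_mul, Finset.sum_neg_distrib]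
    ring
  · have h := moyal_commutator Θ hskew f ψ x μ (-(2 * Complex.I)) (Θ⁻¹ μ)
    have hrow (ρ : Fin d) : (Θ⁻¹ μ ᵥ* Θ) ρ = (1 : Matrix (Fin d) (Fin d) ℝ) μ ρ := by
      rw [← Matrix.nonsing_inv_mul Θ (isUnit_iff_ne_zero.mpr hdet)]
      rfl
    have hc : -(2 * Complex.I) * (Complex.I / 2) = 1 := by
      linear_combination -Complex.I_mul_I
    simp only [hc, hrow, Matrix.one_apply, apply_ite Complex.ofReal, Complex.ofReal_one,
      Complex.ofReal_zero, ite_mul, one_mul, zero_mul, Finset.sum_ite_eq, Finset.mem_univ,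
      if_true, ← two_mul, moyal_const_mul_left] at h
    have hN : nablaTOp Θ μ ψ = fun y => (2 : ℂ)⁻¹ * (fderiv ℝ ψ y (Pi.single μ 1)
        + -(2 * Complex.I) * ((∑ ν, (Θ⁻¹) μ ν * y ν : ℝ) : ℂ) * ψ y) := by
      ext y
      simp only [nablaTOp]
      ring
    rw [hN, moyal_const_mul_right]
    simp only [nablaTOp]
    linear_combination (2 : ℂ)⁻¹ * h

end
end
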